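/- arXiv:math/0610762 — 2 statements merged into one kernel-verified Lean document; each statement's English description precedes it below -/
import Mathlib

section
/- Let N ≥ 2 be an integer, α > 1 and p > 0. For any R > 0 there exists a nondecreasing sequence (p_k)_{k≥1} of positive real numbers such that for every k ≥ 1 and every p > p_k there exist at least k pairwise distinct nonconstant positive functions h ∈ C²([0,R]) satisfying h''(r) + ((N-1)/r)·h'(r) = (1/α)·h(r)^{-α} − p for all r ∈ (0,R), together with h'(0) = 0 and h'(R) = 0 (i.e., at least k nontrivial smooth radial solutions of Δh = (1/α)h^{-α} − p in the ball B_R(0) with homogeneous Neumann boundary condition). -/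
open Set Filter

noncomputable section

/-- `h` is a (nonnegative, positive) smooth radial solution of `Δh = (1/α) h^(-α) - p`
on the ball `B_R(0) ⊂ ℝ^N` with homogeneous Neumann boundary conditions, identified with
a positive `C²` function on `[0, R]` solving the radial ODE
`h'' + ((N-1)/r) h' = (1/α) h^(-α) - p` on `(0, R)` with `h'(0) = h'(R) = 0`. -/
def IsSmoothRadialSol (N : ℕ) (α p R : ℝ) (h : ℝ → ℝ) : Prop :=
  (∀ r ∈ Icc (0 : ℝ) R, 0 < h r) ∧
  ContDiffOn ℝ 2 h (Icc 0 R) ∧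
  (∀ r ∈ Ioo (0 : ℝ) R,
    deriv (deriv h) r + ((N : ℝ) - 1) / r * deriv h r = 1 / α * h r ^ (-α) - p) ∧
  derivWithin h (Icc 0 R) 0 = 0 ∧
  derivWithin h (Icc 0 R) R = 0

/-- averaged right-hand side -/
def mInt (n : ℕ) (g : ℝ → ℝ) (t : ℝ) : ℝ := ∫ τ in (0:ℝ)..1, τ ^ n * g (t * τ)

lemma mInt_cont (n : ℕ) (g : ℝ → ℝ) (hg : Continuous g) : Continuous (mInt n g) := by
  unfold mInt
  apply intervalIntegral.continuous_parametric_intervalIntegral_of_continuous'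
  unfold Function.uncurry
  fun_prop

lemma mInt_bound (n : ℕ) (g : ℝ → ℝ) (t C : ℝ)
    (h : ∀ τ ∈ Icc (0:ℝ) 1, |g (t * τ)| ≤ C) : |mInt n g t| ≤ C := by
  have := intervalIntegral.norm_integral_le_of_norm_le_const (a := 0) (b := 1)
    (f := fun τ => τ ^ n * g (t * τ)) (C := C) ?_
  · simpa [mInt] using this
  · intro x hx
    rw [uIoc_of_le zero_le_one] at hx
    rw [Real.norm_eq_abs, abs_mul, abs_of_nonneg (pow_nonneg hx.1.le n)]
    have h1 : x ^ n ≤ 1 := pow_le_one₀ hx.1.le hx.2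
    have h2 := h x ⟨hx.1.le, hx.2⟩
    nlinarith [abs_nonneg (g (t * x))]

lemma mInt_lower (n : ℕ) (g : ℝ → ℝ) (hg : Continuous g) (t : ℝ) (h : ∀ x, -1 ≤ g x) :
    -1 ≤ mInt n g t := by
  have : ∫ τ in (0:ℝ)..1, (-1:ℝ) ≤ mInt n g t := by
    unfold mInt
    apply intervalIntegral.integral_mono_on zero_le_one
    · simp
    · apply Continuous.intervalIntegrable; fun_prop
    · intro x hx
      have h1 : x ^ n ≤ 1 := pow_le_one₀ hx.1 hx.2
      have h0 : 0 ≤ x ^ n := pow_nonneg hx.1 n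
      nlinarith [h (t * x)]
  simpa using this

lemma mInt_sub (n : ℕ) (g g' : ℝ → ℝ) (hg : Continuous g) (hg' : Continuous g') (t : ℝ) :
    mInt n g t - mInt n g' t = mInt n (fun x => g x - g' x) t := by
  unfold mInt
  rw [← intervalIntegral.integral_sub]
  · congr 1; ext; ring
  · apply Continuous.intervalIntegrable; fun_prop
  · apply Continuous.intervalIntegrable; fun_prop

lemma mInt_mul (n : ℕ) (g : ℝ → ℝ) (s : ℝ) :
    s ^ (n + 1) * mInt n g s = ∫ x in (0:ℝ)..s, x ^ n * g x := by
  have := intervalIntegral.mul_integral_comp_mul_left (a := 0) (b := 1)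
    (f := fun x => x ^ n * g x) (c := s)
  simp only [mul_zero, mul_one] at this
  rw [← this, mInt, pow_succ', mul_assoc, ← intervalIntegral.integral_const_mul]
  congr 2; ext; ring

lemma mInt_deriv (n : ℕ) (g : ℝ → ℝ) (hg : Continuous g) (s : ℝ) :
    HasDerivAt (fun s => s * mInt n g s) (g s - n * mInt n g s) s := by
  rcases eq_or_ne s 0 with rfl | hs
  · have h0 : g 0 - n * mInt n g 0 = mInt n g 0 := by
      have : mInt n g 0 = g 0 / (n + 1) := by
        simp [mInt, integral_pow]; ring
      rw [this]; field_simp; ring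
    rw [h0, hasDerivAt_iff_tendsto_slope]
    have := ((mInt_cont n g hg).tendsto 0).mono_left (nhdsWithin_le_nhds (s := {0}ᶜ))
    refine this.congr' ?_
    filter_upwards [self_mem_nhdsWithin] with x hx
    have hx : x ≠ 0 := hx
    simp [slope_def_field]; field_simp
  · have hP : HasDerivAt (fun s => ∫ x in (0:ℝ)..s, x ^ n * g x) (s ^ n * g s) s := by
      exact intervalIntegral.integral_hasDerivAt_right
          ((by fun_prop : Continuous fun x => x ^ n * g x).intervalIntegrable _ _)
          ((by fun_prop : Continuous fun x => x ^ n * g x).stronglyMeasurableAtFilter _ _)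
          ((by fun_prop : Continuous fun x => x ^ n * g x).continuousAt)
    have hq : HasDerivAt (fun s : ℝ => s ^ n) (n * s ^ (n - 1)) s := hasDerivAt_pow n s
    have h1 := hP.div hq (pow_ne_zero n hs)
    have h2 : (fun s => s * mInt n g s) =ᶠ[nhds s]
        (fun s => (∫ x in (0:ℝ)..s, x ^ n * g x) / s ^ n) := by
      filter_upwards [isOpen_ne.mem_nhds hs] with x hx
      have hx : x ≠ 0 := hx
      rw [← mInt_mul, eq_div_iff (pow_ne_zero n hx)]; ring
    refine HasDerivAt.congr_of_eventuallyEq ?_ h2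
    refine h1.congr_deriv ?_
    rw [← mInt_mul]
    rcases n with _ | n
    · simp
    · simp only [Nat.add_sub_cancel]
      field_simp
      ring

open BoundedContinuousFunction in
theorem lemA (n : ℕ) (F : ℝ → ℝ) (K : NNReal) (hF : LipschitzWith K F) (B : ℝ)
    (hB : ∀ x, |F x| ≤ B) (hF1 : ∀ x, -1 ≤ F x) :
    ∃ u m d : ℝ → ℝ → ℝ, Continuous (fun q : ℝ × ℝ => u q.1 q.2) ∧
      Continuous (fun q : ℝ × ℝ => m q.1 q.2) ∧ (∀ η, Continuous (d η)) ∧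
      (∀ η, u η 0 = η) ∧ (∀ η s, HasDerivAt (u η) (s * m η s) s) ∧
      (∀ η s, HasDerivAt (fun s => s * m η s) (d η s) s) ∧
      (∀ η s, 0 ≤ s → d η s = F (u η s) - n * m η s) ∧ (∀ η s, -1 ≤ m η s) := by
  have hB0 : 0 ≤ B := (abs_nonneg _).trans (hB 0)
  set l : ℝ := K + 1 with hl
  have hl0 : 0 < l := by positivity
  have hFc : Continuous F := hF.continuous
  -- the nonlinear term
  let G : (ℝ →ᵇ ℝ) → ℝ → ℝ := fun v x => F (Real.exp (l * x ^ 2) * v x)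
  have hGc : ∀ v, Continuous (G v) := fun v => by
    have := v.continuous
    simp only [G]; fun_prop
  let I : (ℝ →ᵇ ℝ) → ℝ → ℝ := fun v s => ∫ t in (0:ℝ)..s, t * mInt n (G v) t
  have hmc : ∀ v, Continuous (fun t => t * mInt n (G v) t) := fun v =>
    continuous_id.mul (mInt_cont n _ (hGc v))
  have hIc : ∀ v, Continuous (I v) := fun v =>
    intervalIntegral.continuous_primitive (fun a b => (hmc v).intervalIntegrable a b) 0
  have hIb : ∀ v s, 0 ≤ s → |I v s| ≤ B * s ^ 2 := by
    intro v s hs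
    have := intervalIntegral.norm_integral_le_of_norm_le_const (a := 0) (b := s)
      (f := fun t => t * mInt n (G v) t) (C := s * B) ?_
    · simp only [sub_zero, abs_of_nonneg hs, Real.norm_eq_abs] at this
      simp only [I]; linarith
    · intro x hx
      rw [uIoc_of_le hs] at hx
      rw [Real.norm_eq_abs, abs_mul, abs_of_nonneg hx.1.le]
      exact mul_le_mul hx.2 (mInt_bound n _ x B (fun τ _ => hB _)) (abs_nonneg _) hs
  let T0 : ℝ → (ℝ →ᵇ ℝ) → ℝ → ℝ := fun η v s =>
    Real.exp (-(l * (max s 0) ^ 2)) * (η + I v (max s 0))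
  have hT0c : ∀ η v, Continuous (T0 η v) := fun η v => by
    have := hIc v
    simp only [T0]; fun_prop
  have hT0b : ∀ η v s, ‖T0 η v s‖ ≤ |η| + B / l := by
    intro η v s
    have hs : 0 ≤ max s 0 := le_max_right _ _
    simp only [T0]
    set x := max s 0
    rw [Real.norm_eq_abs, abs_mul, Real.abs_exp]
    have h1 : |η + I v x| ≤ |η| + B * x ^ 2 := (abs_add_le _ _).trans (by linarith [hIb v x hs])
    have h2 : Real.exp (-(l * x ^ 2)) ≤ 1 := by
      apply Real.exp_le_one_iff.2; have := mul_nonneg hl0.le (sq_nonneg x); linarith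
    have h3 : Real.exp (-(l * x ^ 2)) * (l * x ^ 2) ≤ 1 := by
      rw [Real.exp_neg, inv_mul_le_iff₀ (Real.exp_pos _)]
      linarith [Real.add_one_le_exp (l * x ^ 2)]
    calc _ ≤ Real.exp (-(l * x ^ 2)) * (|η| + B * x ^ 2) := by gcongr
      _ = Real.exp (-(l * x ^ 2)) * |η| + B / l * (Real.exp (-(l * x ^ 2)) * (l * x ^ 2)) := by
        field_simp
      _ ≤ 1 * |η| + B / l * 1 := by gcongr
      _ = _ := by ring
  let T : ℝ → (ℝ →ᵇ ℝ) → (ℝ →ᵇ ℝ) := fun η v =>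
    BoundedContinuousFunction.ofNormedAddCommGroup (T0 η v) (hT0c η v) _ (hT0b η v)
  have hIl : ∀ v v' s, 0 ≤ s → |I v s - I v' s| ≤ 1 / 2 * dist v v' * Real.exp (l * s ^ 2) := by
    intro v v' s hs
    have hd : ∀ t, 0 ≤ t → |mInt n (G v) t - mInt n (G v') t|
        ≤ K * dist v v' * Real.exp (l * t ^ 2) := by
      intro t ht
      rw [mInt_sub n _ _ (hGc v) (hGc v')]
      apply mInt_bound
      intro τ hτ
      have h1 := hF.dist_le_mul (Real.exp (l * (t * τ) ^ 2) * v (t * τ))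
        (Real.exp (l * (t * τ) ^ 2) * v' (t * τ))
      rw [Real.dist_eq, Real.dist_eq, ← mul_sub, abs_mul, Real.abs_exp] at h1
      have h2 : |v (t * τ) - v' (t * τ)| ≤ dist v v' := by
        rw [← Real.dist_eq]; exact BoundedContinuousFunction.dist_coe_le_dist _
      have h3 : Real.exp (l * (t * τ) ^ 2) ≤ Real.exp (l * t ^ 2) := by
        apply Real.exp_le_exp.2
        apply mul_le_mul_of_nonneg_left _ hl0.le
        apply pow_le_pow_left₀ (mul_nonneg ht hτ.1)
        nlinarith [hτ.1, hτ.2]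
      refine h1.trans ?_
      calc _ ≤ K * (Real.exp (l * t ^ 2) * dist v v') := by gcongr
        _ = _ := by ring
    have e : I v s - I v' s = ∫ t in (0:ℝ)..s, (t * mInt n (G v) t - t * mInt n (G v') t) := by
      simp only [I]
      rw [intervalIntegral.integral_sub ((hmc v).intervalIntegrable _ _)
        ((hmc v').intervalIntegrable _ _)]
    rw [e, ← Real.norm_eq_abs]
    have hb := intervalIntegral.norm_integral_le_of_norm_le (μ := MeasureTheory.volume) (a := 0)
      (b := s) (f := fun t => t * mInt n (G v) t - t * mInt n (G v') t)
      (g := fun t => K * dist v v' * (t * Real.exp (l * t ^ 2))) hs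
      (Eventually.of_forall (fun t ht => ?_)) (Continuous.intervalIntegrable (by fun_prop) _ _)
    · refine hb.trans ?_
      have hintg : ∫ t in (0:ℝ)..s, K * dist v v' * (t * Real.exp (l * t ^ 2)) =
          K * dist v v' / (2 * l) * Real.exp (l * s ^ 2) -
          K * dist v v' / (2 * l) * Real.exp (l * 0 ^ 2) := by
        apply intervalIntegral.integral_eq_sub_of_hasDerivAt
          (f := fun s => K * dist v v' / (2 * l) * Real.exp (l * s ^ 2))
        · intro x _
          have := (((hasDerivAt_pow 2 x).const_mul l).exp).const_mul (K * dist v v' / (2 * l))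
          refine this.congr_deriv ?_
          field_simp
          simp
        · exact Continuous.intervalIntegrable (by fun_prop) _ _
      rw [hintg]
      have h4 : K * dist v v' / (2 * l) ≤ 1 / 2 * dist v v' := by
        rw [div_le_iff₀ (by positivity)]
        have := dist_nonneg (x := v) (y := v')
        rw [hl]; nlinarith
      have h5 : 0 ≤ K * dist v v' / (2 * l) * Real.exp (l * 0 ^ 2) := by positivity
      have h6 := mul_le_mul_of_nonneg_right h4 (Real.exp_pos (l * s ^ 2)).le
      linarith
    · rw [← mul_sub, Real.norm_eq_abs, abs_mul, abs_of_nonneg ht.1.le]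
      have := mul_le_mul_of_nonneg_left (hd t ht.1.le) ht.1.le
      linarith
  have hTc : ∀ η, ContractingWith (1 / 2 : NNReal) (T η) := by
    intro η
    refine ⟨by rw [← NNReal.coe_lt_coe]; norm_num, LipschitzWith.of_dist_le_mul fun v v' => ?_⟩
    rw [BoundedContinuousFunction.dist_le (by positivity)]
    intro s
    change dist (T0 η v s) (T0 η v' s) ≤ _
    simp only [T0]
    rw [Real.dist_eq, ← mul_sub, abs_mul, Real.abs_exp, add_sub_add_left_eq_sub]
    have := hIl v v' (max s 0) (le_max_right _ _)
    rw [Real.exp_neg, inv_mul_le_iff₀ (Real.exp_pos _)]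
    refine this.trans (le_of_eq ?_)
    push_cast; ring
  let V : ℝ → (ℝ →ᵇ ℝ) := fun η => ContractingWith.fixedPoint (T η) (hTc η)
  have hV : ∀ η, T η (V η) = V η := fun η => (hTc η).fixedPoint_isFixedPt
  have hVl : ∀ η η', dist (V η) (V η') ≤ 2 * dist η η' := by
    intro η η'
    have := (hTc η).fixedPoint_lipschitz_in_map (hTc η') (C := dist η η') ?_
    · refine this.trans (le_of_eq ?_)
      push_cast; ring
    · intro v
      rw [BoundedContinuousFunction.dist_le dist_nonneg]
      intro s
      change dist (T0 η v s) (T0 η' v s) ≤ _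
      simp only [T0]
      rw [Real.dist_eq, ← mul_sub, abs_mul, Real.abs_exp, add_sub_add_right_eq_sub, Real.dist_eq]
      have h2 : Real.exp (-(l * (max s 0) ^ 2)) ≤ 1 := by
        apply Real.exp_le_one_iff.2; have := mul_nonneg hl0.le (sq_nonneg (max s 0)); linarith
      exact mul_le_of_le_one_left (abs_nonneg _) h2
  have hVc : Continuous V :=
    (LipschitzWith.of_dist_le_mul (K := 2) (by intro x y; exact_mod_cast hVl x y)).continuous
  have hVe : Continuous (fun q : ℝ × ℝ => V q.1 q.2) := by
    have h1 : Continuous (fun q : ℝ × ℝ => (V q.1, q.2)) := by fun_prop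
    exact continuous_eval.comp h1
  have hGV : Continuous (fun q : ℝ × ℝ => G (V q.1) q.2) := by
    simp only [G]; fun_prop
  have hm : Continuous (fun q : ℝ × ℝ => mInt n (G (V q.1)) q.2) := by
    unfold mInt
    apply intervalIntegral.continuous_parametric_intervalIntegral_of_continuous'
      (f := fun (q : ℝ × ℝ) τ => τ ^ n * G (V q.1) (q.2 * τ))
    have : Continuous (fun x : (ℝ × ℝ) × ℝ => G (V x.1.1) (x.1.2 * x.2)) :=
      hGV.comp (g := fun q : ℝ × ℝ => G (V q.1) q.2)
        (f := fun x : (ℝ × ℝ) × ℝ => (x.1.1, x.1.2 * x.2)) (by fun_prop)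
    unfold Function.uncurry
    exact (by fun_prop : Continuous fun x : (ℝ × ℝ) × ℝ => x.2 ^ n).mul this
  refine ⟨fun η s => η + I (V η) s, fun η s => mInt n (G (V η)) s,
    fun η s => G (V η) s - n * mInt n (G (V η)) s, ?_, hm, ?_, ?_, ?_, ?_, ?_, ?_⟩
  · have : Continuous (fun q : ℝ × ℝ => I (V q.1) q.2) := by
      simp only [I]
      apply intervalIntegral.continuous_parametric_intervalIntegral_of_continuous
        (f := fun (q : ℝ × ℝ) t => t * mInt n (G (V q.1)) t)
      · have : Continuous (fun x : (ℝ × ℝ) × ℝ => mInt n (G (V x.1.1)) x.2) :=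
          hm.comp (g := fun q : ℝ × ℝ => mInt n (G (V q.1)) q.2)
            (f := fun x : (ℝ × ℝ) × ℝ => (x.1.1, x.2)) (by fun_prop)
        unfold Function.uncurry
        exact continuous_snd.mul this
      · fun_prop
    exact continuous_fst.add this
  · intro η
    exact (hGc _).sub (continuous_const.mul (mInt_cont n _ (hGc _)))
  · intro η; simp [I]
  · intro η s
    have := intervalIntegral.integral_hasDerivAt_right (a := 0) (b := s)
      ((hmc (V η)).intervalIntegrable _ _)
      ((hmc (V η)).stronglyMeasurableAtFilter _ _) ((hmc (V η)).continuousAt)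
    exact this.const_add η
  · intro η s
    exact mInt_deriv n _ (hGc _) s
  · intro η s hs
    have h1 : T0 η (V η) s = V η s := by
      have := congrArg (fun f : ℝ →ᵇ ℝ => f s) (hV η)
      exact this
    have h2 : G (V η) s = F (η + I (V η) s) := by
      simp only [G]
      rw [← h1]
      simp only [T0]
      rw [max_eq_left hs, ← mul_assoc, ← Real.exp_add]
      simp
    simp only [h2]
  · intro η s
    exact mInt_lower n _ (hGc _) s (fun x => hF1 _)
lemma lower_u (u m : ℝ → ℝ) (hu : ∀ s, HasDerivAt u (s * m s) s) (hm : ∀ s, -1 ≤ m s)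
    (s : ℝ) (hs : 0 ≤ s) : u 0 - s ^ 2 / 2 ≤ u s := by
  have hd : ∀ x, HasDerivAt (fun x => u x + x ^ 2 / 2) (x * m x + x) x := fun x => by
    refine ((hu x).add ((hasDerivAt_pow 2 x).div_const 2)).congr_deriv ?_
    simp
  have hmono : MonotoneOn (fun x => u x + x ^ 2 / 2) (Ici 0) := by
    apply monotoneOn_of_deriv_nonneg (convex_Ici 0)
    · exact fun x _ => (hd x).continuousAt.continuousWithinAt
    · exact fun x _ => (hd x).differentiableAt.differentiableWithinAt
    · intro x hx
      rw [interior_Ici] at hx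
      have hx : 0 < x := hx
      rw [(hd x).deriv]
      nlinarith [hm x]
  have := hmono (mem_Ici.2 le_rfl) (mem_Ici.2 hs) hs
  simp at this
  linarith

lemma rho_pos (n : ℕ) (F : ℝ → ℝ) (K : ℝ) (hK : 0 ≤ K) (hF : ∀ x, |F x| ≤ K * |x - 1|)
    (u m d : ℝ → ℝ) (hu : ∀ s, HasDerivAt u (s * m s) s)
    (hd : ∀ s, HasDerivAt (fun s => s * m s) (d s) s)
    (hd2 : ∀ s, 0 ≤ s → d s = F (u s) - n * m s) (hm : ∀ s, -1 ≤ m s) (h0 : 2 ≤ u 0)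
    (s : ℝ) (hs : 0 ≤ s) : 0 < (u s - 1) ^ 2 + (s * m s) ^ 2 := by
  have hlow := lower_u u m hu hm
  have hsmall : ∀ s, 0 ≤ s → s ≤ 1 → 0 < (u s - 1) ^ 2 + (s * m s) ^ 2 := by
    intro s hs hs1
    have : 0 < u s - 1 := by nlinarith [hlow s hs]
    positivity
  rcases le_total s 1 with h | h
  · exact hsmall s hs h
  set C : ℝ := 1 + K + 2 * n with hC
  have hder : ∀ x, HasDerivAt (fun x => ((u x - 1) ^ 2 + (x * m x) ^ 2) * Real.exp (C * x))
      ((2 * (u x - 1) * (x * m x) + 2 * (x * m x) * d x) * Real.exp (C * x)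
        + ((u x - 1) ^ 2 + (x * m x) ^ 2) * (Real.exp (C * x) * C)) x := fun x => by
    have h1 := (((hu x).sub_const 1).pow 2).add ((hd x).pow 2)
    have h2 := ((hasDerivAt_id x).const_mul C).exp
    refine (h1.mul h2).congr_deriv ?_
    simp
  have hmono : MonotoneOn (fun x => ((u x - 1) ^ 2 + (x * m x) ^ 2) * Real.exp (C * x))
      (Ici 1) := by
    apply monotoneOn_of_deriv_nonneg (convex_Ici 1)
    · exact fun x _ => (hder x).continuousAt.continuousWithinAt
    · exact fun x _ => (hder x).differentiableAt.differentiableWithinAt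
    · intro x hx
      rw [interior_Ici] at hx
      have hx : 1 < x := hx
      rw [(hder x).deriv, hd2 x (by linarith)]
      have e := Real.exp_pos (C * x)
      set w := u x - 1
      set y := x * m x with hy
      have hy2 : y * m x ≤ y ^ 2 := by
        rw [hy]; nlinarith [sq_nonneg (m x), mul_nonneg (by linarith : 0 ≤ x) (sq_nonneg (m x))]
      have h1 : -(w ^ 2 + y ^ 2) ≤ 2 * w * y := by nlinarith [sq_nonneg (w + y)]
      have h2 : -(K * (w ^ 2 + y ^ 2)) ≤ 2 * y * F (u x) := by
        have a1 : |y * F (u x)| ≤ |y| * (K * |w|) := by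
          rw [abs_mul]; exact mul_le_mul_of_nonneg_left (hF _) (abs_nonneg _)
        have a2 : 2 * (|y| * |w|) ≤ w ^ 2 + y ^ 2 := by
          nlinarith [sq_nonneg (|y| - |w|), sq_abs y, sq_abs w]
        have a3 := neg_abs_le (y * F (u x))
        nlinarith [mul_le_mul_of_nonneg_left a2 hK]
      have hn : (0:ℝ) ≤ n := Nat.cast_nonneg n
      have h3 : 0 ≤ (2 * w * y + 2 * y * (F (u x) - n * m x)) + (w ^ 2 + y ^ 2) * C := by
        rw [hC]; nlinarith [mul_le_mul_of_nonneg_left hy2 hn, mul_nonneg hn (sq_nonneg w)]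
      nlinarith [mul_nonneg h3 e.le]
  have h1 := hmono (mem_Ici.2 le_rfl) (mem_Ici.2 h) h
  simp only at h1
  have h2 := hsmall 1 zero_le_one le_rfl
  have h3 : 0 < ((u s - 1) ^ 2 + (s * m s) ^ 2) * Real.exp (C * s) :=
    lt_of_lt_of_le (mul_pos h2 (Real.exp_pos _)) h1
  exact pos_of_mul_pos_left h3 (Real.exp_pos _).le

lemma energy (n : ℕ) (F G : ℝ → ℝ) (hG : ∀ x, HasDerivAt G (-F x) x)
    (u m d : ℝ → ℝ) (hu : ∀ s, HasDerivAt u (s * m s) s)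
    (hd : ∀ s, HasDerivAt (fun s => s * m s) (d s) s)
    (hd2 : ∀ s, 0 ≤ s → d s = F (u s) - n * m s)
    (s : ℝ) (hs : 0 ≤ s) : G (u s) ≤ G (u 0) := by
  have hder : ∀ x, HasDerivAt (fun x => (x * m x) ^ 2 / 2 + G (u x))
      ((x * m x) * d x + (-F (u x)) * (x * m x)) x := fun x => by
    refine ((((hd x).pow 2).div_const 2).add ((hG (u x)).comp x (hu x))).congr_deriv ?_
    simp
    ring
  have hanti : AntitoneOn (fun x => (x * m x) ^ 2 / 2 + G (u x)) (Ici 0) := by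
    apply antitoneOn_of_deriv_nonpos (convex_Ici 0)
    · exact fun x _ => (hder x).continuousAt.continuousWithinAt
    · exact fun x _ => (hder x).differentiableAt.differentiableWithinAt
    · intro x hx
      rw [interior_Ici] at hx
      have hx : 0 < x := hx
      rw [(hder x).deriv, hd2 x hx.le]
      have hn : (0:ℝ) ≤ n := Nat.cast_nonneg n
      nlinarith [mul_nonneg (mul_nonneg hn hx.le) (sq_nonneg (m x))]
  have := hanti (mem_Ici.2 le_rfl) (mem_Ici.2 hs) hs
  simp at this
  nlinarith [sq_nonneg (s * m s)]

lemma polar (w y d r θ : ℝ → ℝ) (L : ℝ)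
    (hw : ∀ s ∈ Icc 0 L, HasDerivAt w (y s) s) (hy : ∀ s ∈ Icc 0 L, HasDerivAt y (d s) s)
    (hρ : ∀ s ∈ Icc 0 L, 0 < w s ^ 2 + y s ^ 2)
    (hr : ∀ s ∈ Icc 0 L,
      HasDerivAt r ((w s * y s + y s * d s) / (w s ^ 2 + y s ^ 2)) s)
    (hθ : ∀ s ∈ Icc 0 L,
      HasDerivAt θ ((w s * d s - y s ^ 2) / (w s ^ 2 + y s ^ 2)) s)
    (hy0 : y 0 = 0) (hr0 : r 0 = 0) (hθ0 : θ 0 = 0) (s : ℝ) (hs : s ∈ Icc 0 L) :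
    w s = w 0 * Real.exp (r s) * Real.cos (θ s) ∧ y s = w 0 * Real.exp (r s) * Real.sin (θ s) := by
  let Z : ℝ → ℂ := fun s => (w s : ℂ) + (y s : ℂ) * Complex.I
  let P : ℝ → ℂ := fun s => (r s : ℂ) + (θ s : ℂ) * Complex.I
  have hder : ∀ s ∈ Icc 0 L, HasDerivAt (fun s => Z s * Complex.exp (-P s)) 0 s := by
    intro s hs
    have hZ : HasDerivAt Z ((y s : ℂ) + (d s : ℂ) * Complex.I) s :=
      (hw s hs).ofReal_comp.add ((hy s hs).ofReal_comp.mul_const Complex.I)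
    have hP := (hr s hs).ofReal_comp.add ((hθ s hs).ofReal_comp.mul_const Complex.I)
    refine (hZ.mul (hP.neg.cexp)).congr_deriv ?_
    have h1 : ((w s : ℂ) ^ 2 + (y s : ℂ) ^ 2) ≠ 0 := by
      exact_mod_cast (hρ s hs).ne'
    have key : ((y s : ℂ) + (d s : ℂ) * Complex.I) = Z s *
        ((((w s * y s + y s * d s) / (w s ^ 2 + y s ^ 2) : ℝ) : ℂ) +
        (((w s * d s - y s ^ 2) / (w s ^ 2 + y s ^ 2) : ℝ) : ℂ) * Complex.I) := by
      simp only [Z]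
      push_cast
      field_simp
      linear_combination (-(d s : ℂ) * (w s) * (y s) + (y s : ℂ) ^ 3) * Complex.I_sq
    rw [key]
    simp only [Pi.neg_apply, Pi.add_apply]
    ring
  have hc := constant_of_has_deriv_right_zero (f := fun s => Z s * Complex.exp (-P s))
    (a := 0) (b := L) (fun s hs => (hder s hs).continuousAt.continuousWithinAt)
    (fun s hs => (hder s ⟨hs.1, hs.2.le⟩).hasDerivWithinAt) s hs
  have hP0 : P 0 = 0 := by simp [P, hr0, hθ0]
  have hZ0 : Z 0 = w 0 := by simp [Z, hy0]
  simp only [hP0, hZ0, neg_zero, Complex.exp_zero, mul_one] at hc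
  have hZ : Z s = w 0 * Complex.exp (P s) := by
    rw [← hc, mul_assoc, ← Complex.exp_add]; simp
  constructor
  · have := congrArg Complex.re hZ
    simpa [Z, P, Complex.exp_re, mul_assoc] using this
  · have := congrArg Complex.im hZ
    simpa [Z, P, Complex.exp_im, mul_assoc] using this
lemma core (n k : ℕ) (F : ℝ → ℝ) (K : ℝ) (hK : 0 ≤ K) (hFc : Continuous F)
    (hF : ∀ x, |F x| ≤ K * |x - 1|)
    (u m d : ℝ → ℝ → ℝ) (huc : Continuous (fun q : ℝ × ℝ => u q.1 q.2))
    (hmc : Continuous (fun q : ℝ × ℝ => m q.1 q.2))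
    (hu0 : ∀ η, u η 0 = η) (hu : ∀ η s, HasDerivAt (u η) (s * m η s) s)
    (hd : ∀ η s, HasDerivAt (fun s => s * m η s) (d η s) s)
    (hd2 : ∀ η s, 0 ≤ s → d η s = F (u η s) - n * m η s) (hm : ∀ η s, -1 ≤ m η s)
    (h2 : ∀ s, 0 ≤ s → (u 2 s - 1) * F (u 2 s) ≤ -(u 2 s - 1) ^ 2 / 2)
    (L : ℝ) (hL : 2 * n + 16 * n ^ 2 + 16 * k ≤ L) (hL0 : 0 < L) :
    ∃ η : Fin k → ℝ, Function.Injective η ∧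
      ∀ i, η i ∈ Icc 2 (L ^ 2 + 2) ∧ L * m (η i) L = 0 := by
  have hn : (0:ℝ) ≤ n := Nat.cast_nonneg n
  let W : ℝ → ℝ → ℝ := fun η s => u (max η 2) (max s 0) - 1
  let Y : ℝ → ℝ → ℝ := fun η s => max s 0 * m (max η 2) (max s 0)
  let D : ℝ → ℝ → ℝ := fun η s => F (u (max η 2) (max s 0)) - n * m (max η 2) (max s 0)
  have huc' : Continuous (fun q : ℝ × ℝ => u (max q.1 2) (max q.2 0)) :=
    huc.comp (g := fun q : ℝ × ℝ => u q.1 q.2) (f := fun q : ℝ × ℝ => (max q.1 2, max q.2 0))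
      (by fun_prop)
  have hmc' : Continuous (fun q : ℝ × ℝ => m (max q.1 2) (max q.2 0)) :=
    hmc.comp (g := fun q : ℝ × ℝ => m q.1 q.2) (f := fun q : ℝ × ℝ => (max q.1 2, max q.2 0))
      (by fun_prop)
  have hWc : Continuous (fun q : ℝ × ℝ => W q.1 q.2) := by simp only [W]; fun_prop
  have hYc : Continuous (fun q : ℝ × ℝ => Y q.1 q.2) := by simp only [Y]; fun_prop
  have hDc : Continuous (fun q : ℝ × ℝ => D q.1 q.2) := by simp only [D]; fun_prop
  have hρ : ∀ η s, 0 < W η s ^ 2 + Y η s ^ 2 := fun η s =>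
    rho_pos n F K hK hF (u (max η 2)) (m (max η 2)) (d (max η 2)) (hu _) (hd _) (hd2 _) (hm _)
      (by rw [hu0]; exact le_max_right _ _) _ (le_max_right _ _)
  let a : ℝ → ℝ → ℝ := fun η s => (W η s * Y η s + Y η s * D η s) / (W η s ^ 2 + Y η s ^ 2)
  let q : ℝ → ℝ → ℝ := fun η s => (W η s * D η s - Y η s ^ 2) / (W η s ^ 2 + Y η s ^ 2)
  have hac : Continuous (fun x : ℝ × ℝ => a x.1 x.2) := by
    simp only [a]
    exact Continuous.div (by fun_prop) (by fun_prop) (fun x => (hρ x.1 x.2).ne')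
  have hqc : Continuous (fun x : ℝ × ℝ => q x.1 x.2) := by
    simp only [q]
    exact Continuous.div (by fun_prop) (by fun_prop) (fun x => (hρ x.1 x.2).ne')
  have hac1 : ∀ η, Continuous (a η) := fun η =>
    hac.comp (g := fun q : ℝ × ℝ => a q.1 q.2) (f := fun s => (η, s)) (by fun_prop)
  have hqc1 : ∀ η, Continuous (q η) := fun η =>
    hqc.comp (g := fun x : ℝ × ℝ => q x.1 x.2) (f := fun s => (η, s)) (by fun_prop)
  let θ : ℝ → ℝ → ℝ := fun η s => ∫ t in (0:ℝ)..s, q η t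
  let r : ℝ → ℝ → ℝ := fun η s => ∫ t in (0:ℝ)..s, a η t
  have hθd : ∀ η s, HasDerivAt (θ η) (q η s) s := fun η s =>
    intervalIntegral.integral_hasDerivAt_right ((hqc1 η).intervalIntegrable _ _)
      ((hqc1 η).stronglyMeasurableAtFilter _ _) (hqc1 η).continuousAt
  have hrd : ∀ η s, HasDerivAt (r η) (a η s) s := fun η s =>
    intervalIntegral.integral_hasDerivAt_right ((hac1 η).intervalIntegrable _ _)
      ((hac1 η).stronglyMeasurableAtFilter _ _) (hac1 η).continuousAt
  have hθL : Continuous (fun η => θ η L) := by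
    simp only [θ]
    exact intervalIntegral.continuous_parametric_intervalIntegral_of_continuous' hqc 0 L
  have hpol : ∀ η, 2 ≤ η → ∀ s ∈ Icc 0 L,
      u η s - 1 = (η - 1) * Real.exp (r η s) * Real.cos (θ η s) ∧
      s * m η s = (η - 1) * Real.exp (r η s) * Real.sin (θ η s) := by
    intro η hη s hs
    have e1 : ∀ s ∈ Icc 0 L, W η s = u η s - 1 := fun s hs => by
      simp only [W]; rw [max_eq_left hη, max_eq_left hs.1]
    have e2 : ∀ s ∈ Icc 0 L, Y η s = s * m η s := fun s hs => by
      simp only [Y]; rw [max_eq_left hη, max_eq_left hs.1]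
    have e3 : ∀ s ∈ Icc 0 L, D η s = d η s := fun s hs => by
      simp only [D]; rw [max_eq_left hη, max_eq_left hs.1, hd2 _ _ hs.1]
    have := polar (fun s => u η s - 1) (fun s => s * m η s) (d η) (r η) (θ η) L
      (fun s _ => (hu η s).sub_const 1) (fun s _ => hd η s)
      (fun s hs => by rw [← e1 s hs, ← e2 s hs]; exact hρ η s)
      (fun s hs => by simp only [← e1 s hs, ← e2 s hs, ← e3 s hs]; exact hrd η s)
      (fun s hs => by simp only [← e1 s hs, ← e2 s hs, ← e3 s hs]; exact hθd η s)
      (by simp) (by simp [r]) (by simp [θ]) s hs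
    simpa only [hu0] using this
  -- large η
  have hlarge : -Real.pi < θ (L ^ 2 + 2) L := by
    by_contra! hcon
    have hcont : ContinuousOn (θ (L ^ 2 + 2)) (Icc 0 L) :=
      fun s _ => (hθd _ s).continuousAt.continuousWithinAt
    have h0 : θ (L ^ 2 + 2) 0 = 0 := by simp [θ]
    obtain ⟨s, hs, hs2⟩ := intermediate_value_Icc' hL0.le hcont
      (show -Real.pi ∈ Icc (θ (L ^ 2 + 2) L) (θ (L ^ 2 + 2) 0) from
        ⟨hcon, by rw [h0]; linarith [Real.pi_pos]⟩)
    have h1 := (hpol (L ^ 2 + 2) (by nlinarith) s hs).1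
    rw [hs2, Real.cos_neg, Real.cos_pi] at h1
    have h3 := lower_u _ _ (hu (L ^ 2 + 2)) (hm _) s hs.1
    rw [hu0] at h3
    have h4 : 0 < (L ^ 2 + 2 - 1) * Real.exp (r (L ^ 2 + 2) s) :=
      mul_pos (by nlinarith) (Real.exp_pos _)
    nlinarith [hs.1, hs.2]
  -- η = 2
  have hsmall : θ 2 L ≤ -(k * Real.pi) := by
    have hq1 : ∀ s, 0 ≤ s → q 2 s ≤ 2 * n := by
      intro s hs
      simp only [q]
      rw [div_le_iff₀ (hρ 2 s)]
      simp only [W, Y, D, max_self, max_eq_left hs]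
      have h5 := h2 s hs
      have h6 := hm 2 s
      have h7 := lower_u _ _ (hu 2) (hm 2) s hs
      rw [hu0] at h7
      set w := u 2 s - 1 with hw
      rcases le_total s 1 with h | h
      · have hw2 : 1 / 2 ≤ w := by nlinarith
        have h8 : -(w * m 2 s) ≤ 2 * w ^ 2 := by nlinarith
        nlinarith [mul_le_mul_of_nonneg_left h8 hn, sq_nonneg (s * m 2 s),
          mul_nonneg hn (sq_nonneg (s * m 2 s))]
      · have h8 : -(w * m 2 s) ≤ w ^ 2 + (s * m 2 s) ^ 2 := by
          have : m 2 s ^ 2 ≤ (s * m 2 s) ^ 2 := by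
            rw [mul_pow]; exact le_mul_of_one_le_left (sq_nonneg _) (one_le_pow₀ h)
          nlinarith [sq_nonneg (w + m 2 s), sq_nonneg w]
        nlinarith [mul_le_mul_of_nonneg_left h8 hn, sq_nonneg (s * m 2 s), sq_nonneg w,
          mul_nonneg hn (sq_nonneg (s * m 2 s)), mul_nonneg hn (sq_nonneg w)]
    have hq2 : ∀ s : ℝ, 2 * n ≤ s → q 2 s ≤ -1 / 4 := by
      intro s hs'
      have hs : 0 ≤ s := by linarith
      simp only [q]
      rw [div_le_iff₀ (hρ 2 s)]
      simp only [W, Y, D, max_self, max_eq_left hs]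
      have h5 := h2 s hs
      set w := u 2 s - 1 with hw
      set y := s * m 2 s with hy
      have h8 : -(n * (w * m 2 s)) ≤ (w ^ 2 + y ^ 2) / 4 := by
        have h9 : |2 * n * m 2 s| ≤ |y| := by
          rw [hy, abs_mul, abs_mul s, abs_of_nonneg hs, abs_of_nonneg (by linarith : 0 ≤ 2 * (n:ℝ))]
          exact mul_le_mul_of_nonneg_right hs' (abs_nonneg _)
        have h10 := sq_le_sq.2 h9
        nlinarith [sq_nonneg (w + 2 * n * m 2 s)]
      nlinarith [sq_nonneg y, sq_nonneg w]
    have hk : (0:ℝ) ≤ k := Nat.cast_nonneg k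
    have hnL : 2 * (n:ℝ) ≤ L := by nlinarith
    have hi1 : ∫ t in (0:ℝ)..(2 * n), q 2 t ≤ 2 * n * (2 * n) := by
      have := intervalIntegral.integral_mono_on (a := 0) (b := 2 * (n:ℝ)) (by linarith)
        ((hqc1 2).intervalIntegrable (μ := MeasureTheory.volume) _ _)
        (intervalIntegrable_const (c := 2 * (n:ℝ))) (fun x hx => hq1 x hx.1)
      simpa only [intervalIntegral.integral_const, smul_eq_mul, sub_zero] using this
    have hi2 : ∫ t in (2 * n : ℝ)..L, q 2 t ≤ (L - 2 * n) * (-1 / 4) := by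
      have := intervalIntegral.integral_mono_on (a := 2 * (n:ℝ)) (b := L) hnL
        ((hqc1 2).intervalIntegrable (μ := MeasureTheory.volume) _ _)
        (intervalIntegrable_const (c := (-1 / 4 : ℝ))) (fun x hx => hq2 x hx.1)
      simpa only [intervalIntegral.integral_const, smul_eq_mul] using this
    have hsum : θ 2 L = (∫ t in (0:ℝ)..(2 * n), q 2 t) + ∫ t in (2 * n : ℝ)..L, q 2 t :=
      (intervalIntegral.integral_add_adjacent_intervals ((hqc1 2).intervalIntegrable _ _)
        ((hqc1 2).intervalIntegrable _ _)).symm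
    have := mul_le_mul_of_nonneg_left Real.pi_le_four hk
    rw [hsum]; nlinarith
  have hex : ∀ i : Fin k, ∃ η ∈ Icc 2 (L ^ 2 + 2), θ η L = -((i + 1 : ℕ) * Real.pi) := by
    intro i
    have := intermediate_value_Icc (show (2:ℝ) ≤ L ^ 2 + 2 by nlinarith)
      hθL.continuousOn (show -((i + 1 : ℕ) * Real.pi) ∈ Icc (θ 2 L) (θ (L ^ 2 + 2) L) from ?_)
    · obtain ⟨η, h1, h3⟩ := this
      exact ⟨η, h1, h3⟩
    · have hi : ((i + 1 : ℕ) : ℝ) ≤ k := by exact_mod_cast i.2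
      have hi2 : (1:ℝ) ≤ ((i + 1 : ℕ) : ℝ) := by exact_mod_cast Nat.le_add_left 1 i
      have := Real.pi_pos
      constructor
      · nlinarith
      · nlinarith
  choose η hη1 hη2 using hex
  refine ⟨η, ?_, fun i => ⟨hη1 i, ?_⟩⟩
  · intro i j hij
    have h1 := hη2 i
    rw [hij, hη2 j] at h1
    have h3 := mul_right_cancel₀ Real.pi_pos.ne' (neg_injective h1)
    have h4 : (j:ℕ) + 1 = i + 1 := by exact_mod_cast h3
    exact Fin.ext (by omega)
  · have := (hpol (η i) (hη1 i).1 L ⟨hL0.le, le_rfl⟩).2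
    rw [this, hη2, Real.sin_neg, Real.sin_nat_mul_pi]
    simp
/-- truncated nonlinearity -/
def Ftr (α δ x : ℝ) : ℝ := (max x δ) ^ (-α) - 1

lemma Ftr_lip (α δ : ℝ) (hα : 1 < α) (hδ : 0 < δ) :
    ∃ K : NNReal, LipschitzWith K (Ftr α δ) := by
  have hC : 0 ≤ α * δ ^ (-α - 1) := by positivity
  refine ⟨Real.toNNReal (α * δ ^ (-α - 1)), ?_⟩
  have h1 : LipschitzOnWith (Real.toNNReal (α * δ ^ (-α - 1))) (fun x : ℝ => x ^ (-α)) (Ici δ) := by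
    apply Convex.lipschitzOnWith_of_nnnorm_hasDerivWithin_le (convex_Ici δ)
      (f' := fun x => -α * x ^ (-α - 1))
    · intro x hx
      have hx : δ ≤ x := hx
      exact (Real.hasDerivAt_rpow_const (Or.inl (by linarith))).hasDerivWithinAt
    · intro x hx
      have hx : δ ≤ x := hx
      rw [← NNReal.coe_le_coe, Real.coe_toNNReal _ hC, coe_nnnorm, Real.norm_eq_abs, abs_mul, abs_neg,
        abs_of_pos (by linarith : 0 < α), abs_of_pos (Real.rpow_pos_of_pos (by linarith) _)]
      have := Real.rpow_le_rpow_of_nonpos hδ hx (by linarith : -α - 1 ≤ 0)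
      exact mul_le_mul_of_nonneg_left this (by linarith)
  refine LipschitzWith.of_dist_le_mul fun x y => ?_
  have h2 := h1.dist_le_mul (max x δ) (le_max_right x δ) (max y δ) (le_max_right y δ)
  unfold Ftr
  rw [dist_sub_right]
  refine h2.trans (mul_le_mul_of_nonneg_left ?_ NNReal.zero_le_coe)
  rw [Real.dist_eq, Real.dist_eq]
  exact abs_max_sub_max_le_abs x y δ

lemma Ftr_ge (α δ : ℝ) (hδ : 0 < δ) (x : ℝ) : -1 ≤ Ftr α δ x := by
  have : 0 < (max x δ) ^ (-α) := Real.rpow_pos_of_pos (lt_max_of_lt_right hδ) _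
  unfold Ftr; linarith

lemma Ftr_bound (α δ : ℝ) (hα : 1 < α) (hδ : 0 < δ) (x : ℝ) : |Ftr α δ x| ≤ δ ^ (-α) + 1 := by
  have h1 : 0 < (max x δ) ^ (-α) := Real.rpow_pos_of_pos (lt_max_of_lt_right hδ) _
  have h2 := Real.rpow_le_rpow_of_nonpos hδ (le_max_right x δ) (by linarith : -α ≤ 0)
  unfold Ftr
  rw [abs_le]; constructor <;> linarith

lemma Ftr_pos (α δ : ℝ) (hα : 1 < α) (hδ : 0 < δ) (hδ1 : δ < 1) (x : ℝ) (hx : x < 1) :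
    0 < Ftr α δ x := by
  have := Real.one_lt_rpow_of_pos_of_lt_one_of_neg (lt_max_of_lt_right hδ : 0 < max x δ)
    (max_lt hx hδ1) (by linarith : -α < 0)
  unfold Ftr; linarith

lemma Ftr_neg (α δ : ℝ) (hα : 1 < α) (x : ℝ) (hx : 1 < x) : Ftr α δ x < 0 := by
  have := Real.rpow_lt_one_of_one_lt_of_neg (lt_max_of_lt_left hx : 1 < max x δ)
    (by linarith : -α < 0)
  unfold Ftr; linarith

lemma Ftr_one (α δ : ℝ) (hδ1 : δ < 1) : Ftr α δ 1 = 0 := by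
  unfold Ftr; rw [max_eq_left hδ1.le]; simp

lemma Ftr_quad (α δ : ℝ) (hα : 1 < α) (hδ : 0 < δ) (x : ℝ) (hx : δ ≤ x) (hx2 : x ≤ 2) :
    (x - 1) * Ftr α δ x ≤ -(x - 1) ^ 2 / 2 := by
  have hx0 : 0 < x := by linarith
  unfold Ftr
  rw [max_eq_left hx]
  rcases le_total x 1 with h | h
  · have h1 := Real.rpow_le_rpow_of_exponent_ge hx0 h (by linarith : -α ≤ -1)
    rw [Real.rpow_neg_one] at h1
    have h2 : 1 + (1 - x) ≤ x⁻¹ := by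
      rw [← one_div, le_div_iff₀ hx0]; nlinarith [sq_nonneg (1 - x)]
    nlinarith
  · have h1 := Real.rpow_le_rpow_of_exponent_le h (by linarith : -α ≤ -1)
    rw [Real.rpow_neg_one] at h1
    have h2 : x⁻¹ ≤ 1 - (x - 1) / 2 := by
      rw [← one_div, div_le_iff₀ hx0]; nlinarith
    nlinarith

/-- potential -/
def Gtr (α δ x : ℝ) : ℝ := -∫ t in (1:ℝ)..x, Ftr α δ t

lemma Gtr_deriv (α δ : ℝ) (hα : 1 < α) (hδ : 0 < δ) (x : ℝ) :
    HasDerivAt (Gtr α δ) (-Ftr α δ x) x := by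
  obtain ⟨K, hK⟩ := Ftr_lip α δ hα hδ
  exact (intervalIntegral.integral_hasDerivAt_right (hK.continuous.intervalIntegrable _ _)
      (hK.continuous.stronglyMeasurableAtFilter _ _) hK.continuous.continuousAt).neg

lemma Gtr_eq (α δ : ℝ) (hα : 1 < α) (hδ : 0 < δ) (hδ1 : δ < 1) (x : ℝ) (hx : δ ≤ x) :
    Gtr α δ x = x - 1 + (x ^ (1 - α) - 1) / (α - 1) := by
  obtain ⟨K, hK⟩ := Ftr_lip α δ hα hδ
  have hα1 : α - 1 ≠ 0 := by linarith
  have : ∫ t in (1:ℝ)..x, Ftr α δ t =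
      (-x - x ^ (1 - α) / (α - 1)) - (-1 - 1 ^ (1 - α) / (α - 1)) := by
    apply intervalIntegral.integral_eq_sub_of_hasDerivAt
      (f := fun x : ℝ => -x - x ^ (1 - α) / (α - 1))
    · intro t ht
      have ht1 : δ ≤ t := by
        have := ht.1
        exact (le_min hδ1.le hx).trans this
      have h1 := (hasDerivAt_id t).neg.sub ((Real.hasDerivAt_rpow_const (x := t) (p := 1 - α)
        (Or.inl (by linarith))).div_const (α - 1))
      refine h1.congr_deriv ?_
      unfold Ftr
      rw [max_eq_left ht1, show 1 - α - 1 = -α by ring]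
      field_simp
      ring
    · exact hK.continuous.intervalIntegrable _ _
  rw [Gtr, this, Real.one_rpow]
  ring

lemma range_u (α δ M : ℝ) (hα : 1 < α) (hδ : 0 < δ) (hδ1 : δ < 1)
    (hM : Gtr α δ M ≤ Gtr α δ δ) (η x : ℝ) (hη : 1 ≤ η) (hηM : η ≤ M)
    (hx : Gtr α δ x ≤ Gtr α δ η) : δ ≤ x ∧ x ≤ η := by
  have hG := Gtr_deriv α δ hα hδ
  have hmono : StrictMonoOn (Gtr α δ) (Ici 1) := by
    apply strictMonoOn_of_deriv_pos (convex_Ici 1)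
    · exact fun x _ => (hG x).continuousAt.continuousWithinAt
    · intro x hx
      rw [interior_Ici] at hx
      rw [(hG x).deriv]
      linarith [Ftr_neg α δ hα x hx]
  have hanti : StrictAntiOn (Gtr α δ) (Iic 1) := by
    apply strictAntiOn_of_deriv_neg (convex_Iic 1)
    · exact fun x _ => (hG x).continuousAt.continuousWithinAt
    · intro x hx
      rw [interior_Iic] at hx
      rw [(hG x).deriv]
      linarith [Ftr_pos α δ hα hδ hδ1 x hx]
  constructor
  · by_contra! h
    have h1 := hanti (show x ∈ Iic 1 from (h.trans hδ1).le) (show δ ∈ Iic 1 from hδ1.le) h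
    have h2 := hmono.monotoneOn (show η ∈ Ici 1 from hη) (show M ∈ Ici 1 from hη.trans hηM) hηM
    linarith
  · by_contra! h
    have h1 := hmono (show η ∈ Ici 1 from hη) (show x ∈ Ici 1 from (hη.trans h.le)) h
    linarith

lemma exists_delta (α M : ℝ) (hα : 1 < α) (hM : 2 ≤ M) :
    ∃ δ, 0 < δ ∧ δ < 1 ∧ Gtr α δ M ≤ Gtr α δ δ := by
  have ht := tendsto_rpow_neg_nhdsGT_zero (y := 1 - α) (by linarith)
  set c := M - 1 + (M ^ (1 - α) - 1) / (α - 1) with hc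
  have h1 := ht.eventually_ge_atTop ((c + 1) * (α - 1) + 1)
  have h2 : ∀ᶠ x : ℝ in nhdsWithin 0 (Ioi 0), x ∈ Ioo (0:ℝ) 1 := Ioo_mem_nhdsGT one_pos
  obtain ⟨δ, h3, h4⟩ := (h1.and h2).exists
  refine ⟨δ, h4.1, h4.2, ?_⟩
  rw [Gtr_eq α δ hα h4.1 h4.2 M (by linarith [h4.2]), Gtr_eq α δ hα h4.1 h4.2 δ le_rfl, ← hc]
  have h5 : c + 1 ≤ (δ ^ (1 - α) - 1) / (α - 1) := by
    rw [le_div_iff₀ (by linarith)]; linarith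
  linarith [h4.1]

/-- rescaled result -/
lemma rescaled (n k : ℕ) (α : ℝ) (hα : 1 < α) (L : ℝ)
    (hL : 2 * n + 16 * n ^ 2 + 16 * k ≤ L) (hL0 : 0 < L) :
    ∃ (η : Fin k → ℝ) (u y d : Fin k → ℝ → ℝ), Function.Injective η ∧
      ∀ i, 2 ≤ η i ∧ u i 0 = η i ∧ (∀ s, HasDerivAt (u i) (y i s) s) ∧
        (∀ s, HasDerivAt (y i) (d i s) s) ∧ Continuous (d i) ∧ y i 0 = 0 ∧ y i L = 0 ∧
        (∀ s, 0 ≤ s → 0 < u i s) ∧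
        (∀ s, 0 < s → d i s + n / s * y i s = u i s ^ (-α) - 1) := by
  obtain ⟨δ, hδ, hδ1, hδM⟩ := exists_delta α (L ^ 2 + 2) hα (by nlinarith)
  obtain ⟨K, hK⟩ := Ftr_lip α δ hα hδ
  obtain ⟨u, m, d, huc, hmc, hdc, hu0, hu, hd, hd2, hm⟩ :=
    lemA n (Ftr α δ) K hK _ (Ftr_bound α δ hα hδ) (Ftr_ge α δ hδ)
  have hrange : ∀ η ∈ Icc 2 (L ^ 2 + 2), ∀ s, 0 ≤ s → δ ≤ u η s ∧ u η s ≤ η := by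
    intro η hη s hs
    have h1 := energy n _ _ (Gtr_deriv α δ hα hδ) (u η) (m η) (d η) (hu η) (hd η) (hd2 η) s hs
    rw [hu0] at h1
    exact range_u α δ _ hα hδ hδ1 hδM η (u η s) (by linarith [hη.1]) hη.2 h1
  obtain ⟨η, hinj, hη⟩ := core n k (Ftr α δ) K K.2 hK.continuous
    (fun x => by
      have := hK.dist_le_mul x 1
      rwa [Ftr_one α δ hδ1, Real.dist_eq, Real.dist_eq, sub_zero] at this)
    u m d huc hmc hu0 hu hd hd2 hm
    (fun s hs => by
      have := hrange 2 ⟨le_rfl, by nlinarith⟩ s hs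
      exact Ftr_quad α δ hα hδ _ this.1 this.2) L hL hL0
  refine ⟨η, fun i => u (η i), fun i s => s * m (η i) s, fun i => d (η i), hinj, fun i => ?_⟩
  refine ⟨(hη i).1.1, hu0 _, hu _, hd _, hdc _, by simp, (hη i).2, ?_, ?_⟩
  · intro s hs
    exact hδ.trans_le (hrange _ (hη i).1 s hs).1
  · intro s hs
    have h1 := (hrange _ (hη i).1 s hs.le).1
    simp only
    rw [hd2 _ _ hs.le, Ftr, max_eq_left h1]
    field_simp
    ring

/-- For `N ≥ 2`, `α > 1` and any `R > 0`, there is a nondecreasing sequence `(p_k)` of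
positive reals such that for every `k ≥ 1` and every `p > p_k`, the Neumann problem for
`Δh = (1/α) h^(-α) - p` in `B_R(0)` has at least `k` pairwise distinct nonconstant
positive smooth radial solutions. -/
theorem exists_pk_many_nontrivial_solutions
    (N : ℕ) (hN : 2 ≤ N) (α : ℝ) (hα : 1 < α) (R : ℝ) (hR : 0 < R) :
    ∃ pseq : ℕ → ℝ, (∀ k, 0 < pseq k) ∧ Monotone pseq ∧
      ∀ k : ℕ, 1 ≤ k → ∀ p : ℝ, pseq k < p →
        ∃ f : Fin k → (ℝ → ℝ),
          (∀ i j : Fin k, i ≠ j → ∃ r ∈ Icc (0 : ℝ) R, f i r ≠ f j r) ∧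
          ∀ i : Fin k, IsSmoothRadialSol N α p R (f i) ∧
            ¬ (∀ r ∈ Icc (0 : ℝ) R, f i r = f i 0) := by
  obtain ⟨n, rfl⟩ : ∃ n, N = n + 1 := ⟨N - 1, by omega⟩
  have hcast : ((n + 1 : ℕ) : ℝ) - 1 = n := by push_cast; ring
  have hn : (0:ℝ) ≤ n := Nat.cast_nonneg n
  refine ⟨fun k => 1 + ((2 * n + 16 * n ^ 2 + 16 * k) / R) ^ 2, fun k => by positivity, ?_, ?_⟩
  · intro a b hab
    have : (a:ℝ) ≤ b := by exact_mod_cast hab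
    simp only
    gcongr
  intro k hk p hp
  simp only at hp
  set Q : ℝ := (2 * n + 16 * n ^ 2 + 16 * k) / R with hQ
  have hQ0 : 0 ≤ Q := by positivity
  have hp1 : 1 < p := by nlinarith [sq_nonneg Q]
  have hα0 : 0 < α := by linarith
  have hαp : 1 < α * p := by nlinarith
  obtain ⟨ξ, hξ, hξ1, hξα⟩ : ∃ ξ : ℝ, 0 < ξ ∧ ξ ≤ 1 ∧ ξ ^ (-α) = α * p := by
    refine ⟨(α * p) ^ (-(1 / α)), Real.rpow_pos_of_pos (by linarith) _, ?_, ?_⟩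
    · apply Real.rpow_le_one_of_one_le_of_nonpos hαp.le
      have : 0 < 1 / α := by positivity
      linarith
    · rw [← Real.rpow_mul (by linarith), show -(1 / α) * -α = 1 by field_simp, Real.rpow_one]
  set l : ℝ := Real.sqrt (p / ξ) with hl
  have hl0 : 0 < l := Real.sqrt_pos.2 (by positivity)
  have hl2 : ξ * l ^ 2 = p := by
    rw [hl, Real.sq_sqrt (by positivity)]; field_simp
  have hlQ : Q ≤ l := by
    apply Real.le_sqrt_of_sq_le
    have : p ≤ p / ξ := by
      rw [le_div_iff₀ hξ]; nlinarith
    linarith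
  have hL0 : 0 < l * R := by positivity
  have hL : 2 * n + 16 * n ^ 2 + 16 * k ≤ l * R := by
    rw [hQ, div_le_iff₀ hR] at hlQ; exact hlQ
  obtain ⟨η, u, y, d, hinj, h⟩ := rescaled n k α hα (l * R) hL hL0
  refine ⟨fun i r => ξ * u i (l * r), ?_, ?_⟩
  · intro i j hij
    refine ⟨0, ⟨le_rfl, hR.le⟩, ?_⟩
    simp only [mul_zero, (h i).2.1, (h j).2.1]
    intro he
    exact hij (hinj (mul_left_cancel₀ hξ.ne' he))
  intro i
  obtain ⟨hη, hu0, hu, hy, hdc, hy0, hyL, hpos, hode⟩ := h i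
  have hlin : ∀ r : ℝ, HasDerivAt (fun r : ℝ => l * r) l r := fun r => by
    simpa using (hasDerivAt_id r).const_mul l
  have hD1 : ∀ r, HasDerivAt (fun r => ξ * u i (l * r)) (ξ * (y i (l * r) * l)) r := fun r =>
    ((hu (l * r)).comp r (hlin r)).const_mul ξ
  have hD2 : ∀ r, HasDerivAt (fun r => ξ * (y i (l * r) * l)) (ξ * (d i (l * r) * l * l)) r :=
    fun r => ((((hy (l * r)).comp r (hlin r))).mul_const l).const_mul ξ
  have hd1 : deriv (fun r => ξ * u i (l * r)) = fun r => ξ * (y i (l * r) * l) :=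
    funext fun r => (hD1 r).deriv
  have hd2 : deriv (fun r => ξ * (y i (l * r) * l)) = fun r => ξ * (d i (l * r) * l * l) :=
    funext fun r => (hD2 r).deriv
  have hsol : ∀ r ∈ Ioo (0 : ℝ) R,
      deriv (deriv (fun r => ξ * u i (l * r))) r +
        (((n + 1 : ℕ) : ℝ) - 1) / r * deriv (fun r => ξ * u i (l * r)) r =
      1 / α * (ξ * u i (l * r)) ^ (-α) - p := by
    intro r hr
    have hr0 : 0 < r := hr.1
    have hlr : 0 < l * r := by positivity
    rw [hd1, hd2, hcast, Real.mul_rpow hξ.le (hpos _ hlr.le).le, hξα]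
    have h1 := hode _ hlr
    have h2 : 1 / α * (α * p * u i (l * r) ^ (-α)) - p
        = ξ * l ^ 2 * (u i (l * r) ^ (-α) - 1) := by
      rw [hl2]; field_simp
    rw [h2, ← h1]
    field_simp
  refine ⟨⟨?_, ?_, hsol, ?_, ?_⟩, ?_⟩
  · intro r hr
    exact mul_pos hξ (hpos _ (mul_nonneg hl0.le hr.1))
  · apply ContDiff.contDiffOn
    rw [show (2 : WithTop ℕ∞) = 1 + 1 by norm_num, contDiff_succ_iff_deriv]
    refine ⟨fun r => (hD1 r).differentiableAt, by simp, ?_⟩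
    rw [hd1, contDiff_one_iff_deriv]
    refine ⟨fun r => (hD2 r).differentiableAt, ?_⟩
    rw [hd2]
    fun_prop
  · rw [(hD1 0).hasDerivWithinAt.derivWithin (uniqueDiffOn_Icc hR 0 ⟨le_rfl, hR.le⟩)]
    simp [hy0]
  · rw [(hD1 R).hasDerivWithinAt.derivWithin (uniqueDiffOn_Icc hR R ⟨hR.le, le_rfl⟩)]
    simp [hyL]
  · intro hconst
    have hloc : ∀ r ∈ Ioo (0:ℝ) R, ξ * (y i (l * r) * l) = 0 := by
      intro r hr
      have he : (fun r => ξ * u i (l * r)) =ᶠ[nhds r] fun _ => ξ * u i (l * 0) := by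
        filter_upwards [Ioo_mem_nhds hr.1 hr.2] with x hx
        exact hconst x ⟨hx.1.le, hx.2.le⟩
      rw [← (hD1 r).deriv, he.deriv_eq, deriv_const]
    have hmid : R / 2 ∈ Ioo (0:ℝ) R := ⟨by linarith, by linarith⟩
    have he2 : (fun r => ξ * (y i (l * r) * l)) =ᶠ[nhds (R / 2)] fun _ => 0 := by
      filter_upwards [Ioo_mem_nhds hmid.1 hmid.2] with x hx
      exact hloc x hx
    have h1 := hsol _ hmid
    have h3 := hconst _ ⟨hmid.1.le, hmid.2.le⟩
    simp only at h3
    rw [hd1, he2.deriv_eq, deriv_const] at h1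
    simp only at h1
    rw [hloc _ hmid, h3, mul_zero l, hu0,
      Real.mul_rpow hξ.le (by linarith), hξα] at h1
    have h4 := Real.rpow_lt_one_of_one_lt_of_neg (by linarith : 1 < η i) (by linarith : -α < 0)
    have h5 : 1 / α * (α * p * η i ^ (-α)) = p * η i ^ (-α) := by field_simp
    rw [h5, mul_zero, add_zero] at h1
    nlinarith
end
end

section
/- Let N ≥ 2, α > 1, p > 0 and set ξ = (αp)^{-1/α}. For every η > 0 with η ≠ ξ there exists a unique positive function h ∈ C²([0,∞)) with h(0) = η, h'(0) = 0 satisfying h'' + ((N-1)/r)h' = (1/α)h^{-α} − p on (0,∞). The set of positive critical points of h is an infinite set which can be enumerated as a strictly increasing sequence (r_k^{p,η})_{k≥1} tending to infinity, satisfying r_1^{p,η} ≥ sqrt( 2Nα(η−ξ) / (ξ^{-α} − η^{-α}) ) and lim_{k→∞} ( r_{k+1}^{p,η} − r_k^{p,η} ) = π (αp)^{-(1+α)/(2α)}. Consequently, for each k the restriction of h to [0, r_k^{p,η}] is a smooth radial solution of Δh = (1/α)h^{-α} − p in B_{r_k^{p,η}}(0) with Neumann boundary condition and h(0) = η, and it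 is the unique smooth radial solution with these properties. -/
open Set Filter

noncomputable section

/-- A positive `C²` function on `[0, ∞)` solving the radial equation
`h'' + ((N-1)/r) h' = (1/α) h^(-α) - p` on `(0, ∞)` with `h(0) = η` and `h'(0) = 0`. -/
def IsGlobalSol (N : ℕ) (α p η : ℝ) (h : ℝ → ℝ) : Prop :=
  (∀ r ∈ Ici (0 : ℝ), 0 < h r) ∧
  ContDiffOn ℝ 2 h (Ici 0) ∧
  h 0 = η ∧
  derivWithin h (Ici 0) 0 = 0 ∧
  (∀ r ∈ Ioi (0 : ℝ),
    deriv (deriv h) r + ((N : ℝ) - 1) / r * deriv h r = 1 / α * h r ^ (-α) - p)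

/-- A smooth radial solution of `Δh = (1/α) h^(-α) - p` in `B_R(0)` with Neumann
boundary conditions: a positive `C²` function on `[0, R]` solving the radial ODE
on `(0, R)` with `h'(0) = h'(R) = 0`. -/
def IsNeumannSol (N : ℕ) (α p R : ℝ) (h : ℝ → ℝ) : Prop :=
  (∀ r ∈ Icc (0 : ℝ) R, 0 < h r) ∧
  ContDiffOn ℝ 2 h (Icc 0 R) ∧
  (∀ r ∈ Ioo (0 : ℝ) R,
    deriv (deriv h) r + ((N : ℝ) - 1) / r * deriv h r = 1 / α * h r ^ (-α) - p) ∧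
  derivWithin h (Icc 0 R) 0 = 0 ∧
  derivWithin h (Icc 0 R) R = 0


/-! ### Existence for bounded Lipschitz right-hand sides -/

def innerA (n : ℕ) (φ : ℝ → ℝ) (h : ℝ → ℝ) (t : ℝ) : ℝ :=
  ∫ σ in (0:ℝ)..1, σ ^ n * φ (h (t * σ))

theorem innerA_cont (n : ℕ) (φ h : ℝ → ℝ) (hφ : Continuous φ) (hh : Continuous h) :
    Continuous (innerA n φ h) := by
  unfold innerA
  apply intervalIntegral.continuous_parametric_intervalIntegral_of_continuous'
  fun_prop

def outerT (n : ℕ) (φ : ℝ → ℝ) (h : ℝ → ℝ) (r : ℝ) : ℝ :=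
  ∫ τ in (0:ℝ)..1, r ^ 2 * τ * innerA n φ h (r * τ)

theorem outerT_cont (n : ℕ) (φ h : ℝ → ℝ) (hφ : Continuous φ) (hh : Continuous h) :
    Continuous (outerT n φ h) := by
  unfold outerT
  apply intervalIntegral.continuous_parametric_intervalIntegral_of_continuous'
  have := innerA_cont n φ h hφ hh
  fun_prop

theorem outerT_eq (n : ℕ) (φ h : ℝ → ℝ) (r : ℝ) :
    outerT n φ h r = ∫ t in (0:ℝ)..r, t * innerA n φ h t := by
  have := intervalIntegral.mul_integral_comp_mul_left (a := 0) (b := 1)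
    (f := fun t => t * innerA n φ h t) r
  simp only [mul_zero, mul_one] at this
  rw [← this, outerT, ← intervalIntegral.integral_const_mul]
  congr 1
  ext τ
  ring

theorem innerA_bound (n : ℕ) (φ h : ℝ → ℝ) (B : ℝ) (hB : ∀ x, |φ x| ≤ B) (t : ℝ) :
    |innerA n φ h t| ≤ B := by
  have := intervalIntegral.norm_integral_le_of_norm_le_const (a := (0:ℝ)) (b := 1) (C := B)
    (f := fun σ => σ ^ n * φ (h (t * σ))) ?_
  · simpa [innerA] using this
  · intro x hx
    rw [uIoc_of_le zero_le_one] at hx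
    rw [norm_mul, Real.norm_eq_abs, Real.norm_eq_abs]
    have h1 : |x ^ n| ≤ 1 := by
      rw [abs_of_nonneg (pow_nonneg hx.1.le _)]
      exact pow_le_one₀ hx.1.le hx.2
    have := hB (h (t * x))
    have h2 := abs_nonneg (φ (h (t*x)))
    nlinarith [abs_nonneg (x^n)]

theorem outerT_bound (n : ℕ) (φ h : ℝ → ℝ) (B : ℝ) (hB : ∀ x, |φ x| ≤ B) (r : ℝ) :
    |outerT n φ h r| ≤ r ^ 2 * B := by
  have := intervalIntegral.norm_integral_le_of_norm_le_const (a := (0:ℝ)) (b := 1) (C := r ^ 2 * B)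
    (f := fun τ => r ^ 2 * τ * innerA n φ h (r * τ)) ?_
  · simpa [outerT] using this
  · intro x hx
    rw [uIoc_of_le zero_le_one] at hx
    rw [norm_mul, Real.norm_eq_abs, Real.norm_eq_abs, abs_of_nonneg (by have := hx.1; positivity)]
    have := innerA_bound n φ h B hB (r * x)
    have h3 := abs_nonneg (innerA n φ h (r * x))
    have h4 : r ^ 2 * x ≤ r ^ 2 := by nlinarith [hx.2, sq_nonneg r]
    exact mul_le_mul h4 this h3 (sq_nonneg r)

theorem innerA_diff (n : ℕ) (φ h k : ℝ → ℝ) (hφ : Continuous φ) (hh : Continuous h)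
    (hk : Continuous k) (K D lam : ℝ) (hK : 0 ≤ K) (hD : 0 ≤ D) (hlam : 0 ≤ lam)
    (hL : ∀ x y, |φ x - φ y| ≤ K * |x - y|)
    (hd : ∀ t, |h t - k t| ≤ D * Real.exp (lam * t ^ 2)) (t : ℝ) :
    |innerA n φ h t - innerA n φ k t| ≤ K * D * Real.exp (lam * t ^ 2) := by
  unfold innerA
  rw [← intervalIntegral.integral_sub (Continuous.intervalIntegrable (by fun_prop) _ _)
    (Continuous.intervalIntegrable (by fun_prop) _ _)]
  have := intervalIntegral.norm_integral_le_of_norm_le_const (a := (0:ℝ)) (b := 1)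
    (C := K * D * Real.exp (lam * t ^ 2))
    (f := fun σ => σ ^ n * φ (h (t * σ)) - σ ^ n * φ (k (t * σ))) ?_
  · simpa using this
  · intro x hx
    rw [uIoc_of_le zero_le_one] at hx
    rw [← mul_sub, norm_mul, Real.norm_eq_abs, Real.norm_eq_abs]
    have h1 : |x ^ n| ≤ 1 := by
      rw [abs_of_nonneg (pow_nonneg hx.1.le _)]
      exact pow_le_one₀ hx.1.le hx.2
    have h2 : |φ (h (t * x)) - φ (k (t * x))| ≤ K * D * Real.exp (lam * t ^ 2) := by
      refine (hL _ _).trans ?_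
      rw [mul_assoc]
      refine mul_le_mul_of_nonneg_left ((hd _).trans ?_) hK
      refine mul_le_mul_of_nonneg_left (Real.exp_le_exp.2 ?_) hD
      refine mul_le_mul_of_nonneg_left ?_ hlam
      have : x ^ 2 ≤ 1 := pow_le_one₀ hx.1.le hx.2
      nlinarith [sq_nonneg t]
    calc _ ≤ 1 * (K * D * Real.exp (lam * t ^ 2)) :=
          mul_le_mul h1 h2 (abs_nonneg _) zero_le_one
      _ = _ := one_mul _

theorem exp_int (lam r : ℝ) (hlam : 0 < lam) :
    ∫ τ in (0:ℝ)..1, r ^ 2 * τ * Real.exp (lam * (r * τ) ^ 2) ≤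
      Real.exp (lam * r ^ 2) / (2 * lam) := by
  have h := intervalIntegral.integral_eq_sub_of_hasDerivAt (a := (0:ℝ)) (b := 1)
    (f := fun τ => Real.exp (lam * (r * τ) ^ 2) / (2 * lam))
    (f' := fun τ => r ^ 2 * τ * Real.exp (lam * (r * τ) ^ 2)) ?_
    (Continuous.intervalIntegrable (by fun_prop) _ _)
  · rw [h]
    simp only [mul_one]
    have : 0 < Real.exp (lam * (r * 0) ^ 2) / (2 * lam) := by positivity
    linarith
  · intro x _
    have h1 : HasDerivAt (fun τ : ℝ => lam * (r * τ) ^ 2) (lam * (2 * (r * x) * r)) x := by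
      have := (((hasDerivAt_id x).const_mul r).pow 2).const_mul lam
      simpa using this
    have := (h1.exp).div_const (2 * lam)
    refine this.congr_deriv ?_
    have := hlam.ne'
    field_simp

theorem outerT_diff (n : ℕ) (φ h k : ℝ → ℝ) (hφ : Continuous φ) (hh : Continuous h)
    (hk : Continuous k) (K D lam : ℝ) (hK : 0 ≤ K) (hD : 0 ≤ D) (hlam : 0 < lam)
    (hL : ∀ x y, |φ x - φ y| ≤ K * |x - y|)
    (hd : ∀ t, |h t - k t| ≤ D * Real.exp (lam * t ^ 2)) (r : ℝ) :
    |outerT n φ h r - outerT n φ k r| ≤ K / (2 * lam) * D * Real.exp (lam * r ^ 2) := by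
  have c1 := innerA_cont n φ h hφ hh
  have c2 := innerA_cont n φ k hφ hk
  unfold outerT
  rw [← intervalIntegral.integral_sub (Continuous.intervalIntegrable (by fun_prop) _ _)
    (Continuous.intervalIntegrable (by fun_prop) _ _)]
  have := intervalIntegral.norm_integral_le_of_norm_le (μ := MeasureTheory.volume)
    (a := (0:ℝ)) (b := 1)
    (g := fun τ => K * D * (r ^ 2 * τ * Real.exp (lam * (r * τ) ^ 2)))
    (f := fun τ => r ^ 2 * τ * innerA n φ h (r * τ) - r ^ 2 * τ * innerA n φ k (r * τ))
    zero_le_one ?_ (Continuous.intervalIntegrable (by fun_prop) _ _)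
  · rw [Real.norm_eq_abs] at this
    refine this.trans ?_
    rw [intervalIntegral.integral_const_mul]
    have h1 := mul_le_mul_of_nonneg_left (exp_int lam r hlam) (mul_nonneg hK hD)
    refine h1.trans (le_of_eq ?_)
    field_simp
  · refine Eventually.of_forall fun x hx => ?_
    rw [← mul_sub, norm_mul, Real.norm_eq_abs, Real.norm_eq_abs,
      abs_of_nonneg (by have := hx.1; positivity)]
    have := innerA_diff n φ h k hφ hh hk K D lam hK hD hlam.le hL hd (r * x)
    have h2 : 0 ≤ r ^ 2 * x := by have := hx.1; positivity
    have := mul_le_mul_of_nonneg_left this h2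
    linarith

theorem exists_fixed (n : ℕ) (φ : ℝ → ℝ) (η K B : ℝ) (hK : 0 ≤ K)
    (hφ : Continuous φ) (hL : ∀ x y, |φ x - φ y| ≤ K * |x - y|) (hB : ∀ x, |φ x| ≤ B) :
    ∃ h : ℝ → ℝ, Continuous h ∧ ∀ r, h r = η + outerT n φ h r := by
  set lam : ℝ := K + 1 with hlam'
  have hlam : 0 < lam := by positivity
  have hB0 : 0 ≤ B := (abs_nonneg _).trans (hB 0)
  let lift : BoundedContinuousFunction ℝ ℝ → ℝ → ℝ := fun u r => η + Real.exp (lam * r ^ 2) * u r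
  have hlift : ∀ u, Continuous (lift u) := by
    intro u
    have := u.continuous
    fun_prop
  have hbd : ∀ u r, ‖Real.exp (-(lam * r ^ 2)) * outerT n φ (lift u) r‖ ≤ B / lam := by
    intro u r
    rw [norm_mul, Real.norm_eq_abs, Real.norm_eq_abs, abs_of_pos (Real.exp_pos _), Real.exp_neg,
      inv_mul_le_iff₀ (Real.exp_pos _)]
    refine (outerT_bound n φ (lift u) B hB r).trans ?_
    have := Real.add_one_le_exp (lam * r ^ 2)
    have h2 : r ^ 2 * B = (lam * r ^ 2) * (B / lam) := by field_simp
    rw [h2]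
    exact mul_le_mul_of_nonneg_right (by linarith) (by positivity)
  let T : BoundedContinuousFunction ℝ ℝ → BoundedContinuousFunction ℝ ℝ := fun u =>
    BoundedContinuousFunction.ofNormedAddCommGroup
      (fun r => Real.exp (-(lam * r ^ 2)) * outerT n φ (lift u) r)
      (by
        have := outerT_cont n φ (lift u) hφ (hlift u)
        fun_prop) (B / lam) (hbd u)
  have hT : ContractingWith (1/2 : NNReal) T := by
    refine ⟨by norm_num, LipschitzWith.of_dist_le_mul fun u v => ?_⟩
    rw [BoundedContinuousFunction.dist_le (by positivity)]
    intro r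
    simp only [T, BoundedContinuousFunction.coe_ofNormedAddCommGroup, Real.dist_eq]
    rw [← mul_sub, abs_mul, abs_of_pos (Real.exp_pos _), Real.exp_neg,
      inv_mul_le_iff₀ (Real.exp_pos _)]
    have := outerT_diff n φ (lift u) (lift v) hφ (hlift u) (hlift v) K (dist u v) lam hK dist_nonneg
      hlam hL ?_ r
    · refine this.trans ?_
      have h1 : K / (2 * lam) ≤ 1 / 2 := by
        rw [div_le_div_iff₀ (by positivity) (by norm_num)]
        linarith
      have h2 := mul_le_mul_of_nonneg_right h1
        (mul_nonneg (dist_nonneg (x := u) (y := v)) (Real.exp_pos (lam * r ^ 2)).le)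
      push_cast
      linarith
    · intro t
      have h1 : lift u t - lift v t = Real.exp (lam * t ^ 2) * (u t - v t) := by
        simp only [lift]; ring
      rw [h1, abs_mul, abs_of_pos (Real.exp_pos _), mul_comm]
      refine mul_le_mul_of_nonneg_right ?_ (Real.exp_pos _).le
      rw [← Real.dist_eq]
      exact BoundedContinuousFunction.dist_coe_le_dist t
  let u := ContractingWith.fixedPoint T hT
  have hu : T u = u := ContractingWith.fixedPoint_isFixedPt hT
  refine ⟨lift u, hlift u, fun r => ?_⟩
  have h1 : u r = Real.exp (-(lam * r ^ 2)) * outerT n φ (lift u) r := by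
    conv_lhs => rw [← hu]
    rfl
  change η + Real.exp (lam * r ^ 2) * u r = _
  rw [h1, ← mul_assoc, ← Real.exp_add]
  simp

theorem exists_abstract (n : ℕ) (φ : ℝ → ℝ) (η K B : ℝ) (hK : 0 ≤ K)
    (hφ : Continuous φ) (hL : ∀ x y, |φ x - φ y| ≤ K * |x - y|) (hB : ∀ x, |φ x| ≤ B) :
    ∃ h A : ℝ → ℝ, h 0 = η ∧ Continuous A ∧ (∀ t, HasDerivAt h (t * A t) t) ∧
      (∀ t, A t = ∫ σ in (0:ℝ)..1, σ ^ n * φ (h (t * σ))) ∧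
      ∀ t, HasDerivAt (fun t => t * A t) (φ (h t) - n * A t) t := by
  obtain ⟨h, hc, hh⟩ := exists_fixed n φ η K B hK hφ hL hB
  have cA := innerA_cont n φ h hφ hc
  have e1 : h = fun r => η + ∫ t in (0:ℝ)..r, t * innerA n φ h t := by
    ext r; rw [hh r, outerT_eq]
  refine ⟨h, innerA n φ h, ?_, cA, ?_, fun t => rfl, ?_⟩
  · rw [hh 0, outerT_eq]; simp
  · intro t
    have c3 : Continuous fun t => t * innerA n φ h t := by fun_prop
    have := (c3.integral_hasStrictDerivAt 0 t).hasDerivAt.const_add η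
    rwa [← e1] at this
  · intro t
    rcases eq_or_ne t 0 with rfl | ht
    · have hA0 : innerA n φ h 0 = φ (h 0) / (n + 1) := by
        simp only [innerA, zero_mul, intervalIntegral.integral_mul_const, integral_pow]
        simp
        ring
      have e2 : φ (h 0) - n * innerA n φ h 0 = innerA n φ h 0 := by
        rw [hA0]; field_simp; ring
      rw [e2, hasDerivAt_iff_tendsto_slope_zero]
      have : Tendsto (innerA n φ h) (nhdsWithin 0 {0}ᶜ) (nhds (innerA n φ h 0)) :=
        (cA.tendsto 0).mono_left nhdsWithin_le_nhds
      refine this.congr' ?_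
      filter_upwards [self_mem_nhdsWithin] with x hx
      have hx : x ≠ 0 := hx
      simp [hx]
    · have c3 : Continuous fun s => s ^ n * φ (h s) := by fun_prop
      have hP := (c3.integral_hasStrictDerivAt 0 t).hasDerivAt
      have key : ∀ s : ℝ, s ^ n * (s * innerA n φ h s) = ∫ x in (0:ℝ)..s, x ^ n * φ (h x) := by
        intro s
        have := intervalIntegral.mul_integral_comp_mul_left (a := 0) (b := 1)
          (f := fun s => s ^ n * φ (h s)) s
        simp only [mul_zero, mul_one] at this
        rw [← this, innerA, ← mul_assoc, mul_comm (s ^ n) s, mul_assoc,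
          ← intervalIntegral.integral_const_mul]
        congr 2
        ext σ
        ring
      have hq := hP.div (hasDerivAt_pow n t) (pow_ne_zero n ht)
      have ev : (fun t => t * innerA n φ h t) =ᶠ[nhds t]
          (fun u => ∫ x in (0:ℝ)..u, x ^ n * φ (h x)) / (fun x => x ^ n) := by
        filter_upwards [isOpen_ne.mem_nhds ht] with s hs
        have hs : s ≠ 0 := hs
        simp only [Pi.div_apply]
        rw [← key s]
        field_simp
      refine (hq.congr_of_eventuallyEq ev).congr_deriv ?_
      rw [← key t]
      rcases n with _ | n
      · simp
      · simp only [Nat.add_sub_cancel]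
        field_simp
        push_cast
        ring

/-! ### The nonlinearity and its potential -/

def Gf (α p x : ℝ) : ℝ := 1 / α * x ^ (-α) - p

def Ff (α p x : ℝ) : ℝ := p * x + x ^ (1 - α) / (α * (α - 1))

theorem Gf_deriv (α p x : ℝ) (hα : 1 < α) (hx : 0 < x) :
    HasDerivAt (Gf α p) (-(x ^ (-α - 1))) x := by
  have h := ((Real.hasDerivAt_rpow_const (x := x) (p := -α) (Or.inl hx.ne')).const_mul
    (1 / α)).sub_const p
  refine h.congr_deriv ?_
  have : α ≠ 0 := by positivity
  field_simp

theorem Ff_deriv (α p x : ℝ) (hα : 1 < α) (hx : 0 < x) :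
    HasDerivAt (Ff α p) (-(Gf α p x)) x := by
  have h := ((hasDerivAt_id x).const_mul p).add
    ((Real.hasDerivAt_rpow_const (x := x) (p := 1 - α) (Or.inl hx.ne')).div_const (α * (α - 1)))
  refine h.congr_deriv ?_
  have : α ≠ 0 := by positivity
  have h2 : α - 1 ≠ 0 := by linarith
  have e : 1 - α - 1 = -α := by ring
  rw [Gf, e]
  field_simp
  ring

theorem Gf_anti (α p : ℝ) (hα : 1 < α) : StrictAntiOn (Gf α p) (Ioi 0) := by
  intro x hx y hy hxy
  have hx : 0 < x := hx
  have := Real.rpow_lt_rpow_of_neg hx hxy (z := -α) (by linarith)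
  unfold Gf
  have h1 : 0 < 1 / α := by positivity
  nlinarith

theorem xi_pos (α p ξ : ℝ) (hα : 1 < α) (hp : 0 < p) (hξ : ξ = (α * p) ^ (-(1 / α))) : 0 < ξ := by
  rw [hξ]; positivity

theorem xi_pow (α p ξ : ℝ) (hα : 1 < α) (hp : 0 < p) (hξ : ξ = (α * p) ^ (-(1 / α))) :
    ξ ^ (-α) = α * p := by
  have h : 0 < α * p := by positivity
  rw [hξ, ← Real.rpow_mul h.le]
  have : -(1 / α) * -α = 1 := by
    have : α ≠ 0 := by positivity
    field_simp
  rw [this, Real.rpow_one]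

theorem Gf_xi (α p ξ : ℝ) (hα : 1 < α) (hp : 0 < p) (hξ : ξ = (α * p) ^ (-(1 / α))) :
    Gf α p ξ = 0 := by
  rw [Gf, xi_pow α p ξ hα hp hξ]
  have : α ≠ 0 := by positivity
  field_simp
  ring

theorem Gf_lip (α p a : ℝ) (hα : 1 < α) (ha : 0 < a) (x y : ℝ) (hx : a ≤ x) (hy : a ≤ y) :
    |Gf α p x - Gf α p y| ≤ a ^ (-α - 1) * |x - y| := by
  have := Convex.norm_image_sub_le_of_norm_hasDerivWithin_le (f := Gf α p) (s := Ici a)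
    (f' := fun x => -(x ^ (-α - 1))) (C := a ^ (-α - 1)) (x := y) (y := x)
    (fun z hz => (Gf_deriv α p z hα (ha.trans_le hz)).hasDerivWithinAt) ?_ (convex_Ici a) hy hx
  · simpa [Real.norm_eq_abs] using this
  · intro z hz
    have hz : a ≤ z := hz
    rw [norm_neg, Real.norm_eq_abs, abs_of_pos (Real.rpow_pos_of_pos (ha.trans_le hz) _)]
    exact Real.rpow_le_rpow_of_nonpos ha hz (by linarith)

section pot
variable (α p ξ : ℝ) (hα : 1 < α) (hξ0 : 0 < ξ) (hG : Gf α p ξ = 0)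

theorem Ff_cont (hα : 1 < α) : ContinuousOn (Ff α p) (Ioi 0) := fun x hx =>
  (Ff_deriv α p x hα hx).continuousAt.continuousWithinAt

theorem Gf_pos (hα : 1 < α) (hξ0 : 0 < ξ) (hG : Gf α p ξ = 0) (x : ℝ) (hx : 0 < x) (h : x < ξ) :
    0 < Gf α p x := by
  have := Gf_anti α p hα (mem_Ioi.2 hx) (mem_Ioi.2 hξ0) h
  linarith

theorem Gf_neg (hα : 1 < α) (hξ0 : 0 < ξ) (hG : Gf α p ξ = 0) (x : ℝ) (h : ξ < x) :
    Gf α p x < 0 := by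
  have := Gf_anti α p hα (mem_Ioi.2 hξ0) (mem_Ioi.2 (hξ0.trans h)) h
  linarith

theorem Ff_anti (hα : 1 < α) (hξ0 : 0 < ξ) (hG : Gf α p ξ = 0) :
    StrictAntiOn (Ff α p) (Ioc 0 ξ) := by
  refine strictAntiOn_of_deriv_neg (convex_Ioc 0 ξ) ?_ ?_
  · exact (Ff_cont α p hα).mono fun x hx => hx.1
  · intro x hx
    rw [interior_Ioc] at hx
    rw [(Ff_deriv α p x hα hx.1).deriv]
    have := Gf_pos α p ξ hα hξ0 hG x hx.1 hx.2
    linarith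

theorem Ff_mono (hα : 1 < α) (hξ0 : 0 < ξ) (hG : Gf α p ξ = 0) :
    StrictMonoOn (Ff α p) (Ici ξ) := by
  refine strictMonoOn_of_deriv_pos (convex_Ici ξ) ?_ ?_
  · exact (Ff_cont α p hα).mono fun x hx => hξ0.trans_le hx
  · intro x hx
    rw [interior_Ici] at hx
    rw [(Ff_deriv α p x hα (hξ0.trans hx)).deriv]
    have := Gf_neg α p ξ hα hξ0 hG x hx
    linarith

theorem Ff_min (hα : 1 < α) (hξ0 : 0 < ξ) (hG : Gf α p ξ = 0) (x : ℝ) (hx : 0 < x) (hne : x ≠ ξ) :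
    Ff α p ξ < Ff α p x := by
  rcases lt_or_gt_of_ne hne with h | h
  · exact Ff_anti α p ξ hα hξ0 hG ⟨hx, h.le⟩ ⟨hξ0, le_rfl⟩ h
  · exact Ff_mono α p ξ hα hξ0 hG (mem_Ici.2 le_rfl) (mem_Ici.2 h.le) h

theorem Ff_min' (hα : 1 < α) (hξ0 : 0 < ξ) (hG : Gf α p ξ = 0) (x : ℝ) (hx : 0 < x) :
    Ff α p ξ ≤ Ff α p x := by
  rcases eq_or_ne x ξ with rfl | h
  · rfl
  · exact (Ff_min α p ξ hα hξ0 hG x hx h).le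

theorem Ff_convex (hα : 1 < α) (hξ0 : 0 < ξ) (hG : Gf α p ξ = 0) (x : ℝ) (hx : 0 < x) :
    Ff α p x - Ff α p ξ ≤ -(Gf α p x) * (x - ξ) := by
  rcases lt_trichotomy x ξ with h | rfl | h
  · obtain ⟨c, hc, e⟩ := exists_hasDerivAt_eq_slope (Ff α p) (fun y => -(Gf α p y)) h
      ((Ff_cont α p hα).mono fun y hy => hx.trans_le hy.1)
      (fun y hy => Ff_deriv α p y hα (hx.trans hy.1))
    rw [eq_div_iff (by linarith)] at e
    have := Gf_anti α p hα (mem_Ioi.2 hx) (mem_Ioi.2 (hx.trans hc.1)) hc.1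
    nlinarith
  · simp
  · obtain ⟨c, hc, e⟩ := exists_hasDerivAt_eq_slope (Ff α p) (fun y => -(Gf α p y)) h
      ((Ff_cont α p hα).mono fun y hy => hξ0.trans_le hy.1)
      (fun y hy => Ff_deriv α p y hα (hξ0.trans hy.1))
    rw [eq_div_iff (by linarith)] at e
    have := Gf_anti α p hα (mem_Ioi.2 (hξ0.trans hc.1)) (mem_Ioi.2 hx) hc.2
    nlinarith

theorem Ff_large (α p : ℝ) (hα : 1 < α) (hp : 0 < p) (b C : ℝ) (hb : 0 < b) :
    ∃ a, 0 < a ∧ a < b ∧ C < Ff α p a := by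
  have h := tendsto_rpow_neg_nhdsGT_zero (y := 1 - α) (by linarith)
  have h1 := h.eventually_gt_atTop (|C| * (α * (α - 1)))
  have h2 : ∀ᶠ x in nhdsWithin (0:ℝ) (Ioi 0), x ∈ Ioo 0 b := Ioo_mem_nhdsGT hb
  obtain ⟨a, ha, ha2⟩ := (h1.and h2).exists
  refine ⟨a, ha2.1, ha2.2, ?_⟩
  have h3 : 0 < α * (α - 1) := mul_pos (by linarith) (by linarith)
  have : |C| < a ^ (1 - α) / (α * (α - 1)) := by rwa [lt_div_iff₀ h3]
  have h4 := mul_pos hp ha2.1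
  have := le_abs_self C
  unfold Ff
  linarith
end pot

/-! ### Uniqueness -/

theorem uniq (n : ℕ) (α p R : ℝ) (hα : 1 < α) (hR : 0 < R) (f g f' g' : ℝ → ℝ)
    (cf : ContinuousOn f (Icc 0 R)) (cg : ContinuousOn g (Icc 0 R))
    (cf' : ContinuousOn f' (Icc 0 R)) (cg' : ContinuousOn g' (Icc 0 R))
    (pf : ∀ r ∈ Icc 0 R, 0 < f r) (pg : ∀ r ∈ Icc 0 R, 0 < g r)
    (df : ∀ r ∈ Ioo 0 R, HasDerivAt f (f' r) r) (dg : ∀ r ∈ Ioo 0 R, HasDerivAt g (g' r) r)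
    (df' : ∀ r ∈ Ioo 0 R, HasDerivAt f' (Gf α p (f r) - n / r * f' r) r)
    (dg' : ∀ r ∈ Ioo 0 R, HasDerivAt g' (Gf α p (g r) - n / r * g' r) r)
    (h0 : f 0 = g 0) (h1 : f' 0 = g' 0) : ∀ r ∈ Icc 0 R, f r = g r := by
  have hne : (Icc (0:ℝ) R).Nonempty := ⟨0, le_rfl, hR.le⟩
  obtain ⟨x, hx, hx2⟩ := isCompact_Icc.exists_isMinOn hne (f := fun r => min (f r) (g r)) (ContinuousOn.inf cf cg)
  obtain ⟨a, ha, haf, hag⟩ : ∃ a, 0 < a ∧ (∀ r ∈ Icc 0 R, a ≤ f r) ∧ ∀ r ∈ Icc 0 R, a ≤ g r := by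
    refine ⟨min (f x) (g x), lt_min (pf x hx) (pg x hx), fun r hr => ?_, fun r hr => ?_⟩
    · exact (hx2 hr).trans (min_le_left _ _)
    · exact (hx2 hr).trans (min_le_right _ _)
  set L := a ^ (-α - 1) with hL
  have hL0 : 0 < L := Real.rpow_pos_of_pos ha _
  let y : ℝ → ℝ := fun r => Real.exp (-((1 + L) * r)) * ((f r - g r) ^ 2 + (f' r - g' r) ^ 2)
  have hanti : AntitoneOn y (Icc 0 R) := by
    refine antitoneOn_of_hasDerivWithinAt_nonpos (convex_Icc 0 R) (by fun_prop)
      (f' := fun r => Real.exp (-((1 + L) * r)) * (-((1 + L))) *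
        ((f r - g r) ^ 2 + (f' r - g' r) ^ 2) + Real.exp (-((1 + L) * r)) *
        (2 * (f r - g r) * (f' r - g' r) + 2 * (f' r - g' r) *
          ((Gf α p (f r) - n / r * f' r) - (Gf α p (g r) - n / r * g' r)))) ?_ ?_
    · intro r hr
      rw [interior_Icc] at hr
      have e1 : HasDerivAt (fun r : ℝ => Real.exp (-((1 + L) * r)))
          (Real.exp (-((1 + L) * r)) * (-((1 + L)))) r := by
        have := (((hasDerivAt_id r).const_mul (1 + L)).neg).exp
        simpa using this
      have e2 := (((df r hr).sub (dg r hr)).pow 2).add (((df' r hr).sub (dg' r hr)).pow 2)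
      have := e1.mul e2
      refine (this.congr_deriv ?_).hasDerivWithinAt
      simp
    · intro r hr
      rw [interior_Icc] at hr
      have hr' : r ∈ Icc 0 R := ⟨hr.1.le, hr.2.le⟩
      have l := Gf_lip α p a hα ha (f r) (g r) (haf r hr') (hag r hr')
      rw [← hL] at l
      have key : 2 * (f r - g r) * (f' r - g' r) + 2 * (f' r - g' r) *
          ((Gf α p (f r) - n / r * f' r) - (Gf α p (g r) - n / r * g' r)) ≤
          (1 + L) * ((f r - g r) ^ 2 + (f' r - g' r) ^ 2) := by
        set D := f r - g r
        set D' := f' r - g' r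
        have b1 : 0 ≤ n / r * D' ^ 2 := by have := hr.1; positivity
        have b2 : D' * (Gf α p (f r) - Gf α p (g r)) ≤ |D'| * (L * |D|) := by
          refine (le_abs_self _).trans ?_
          rw [abs_mul]
          exact mul_le_mul_of_nonneg_left l (abs_nonneg _)
        have b3 : 2 * D * D' ≤ D ^ 2 + D' ^ 2 := by nlinarith [sq_nonneg (D - D')]
        have b4 : 2 * (|D'| * |D|) ≤ D ^ 2 + D' ^ 2 := by
          rw [← sq_abs D, ← sq_abs D']; nlinarith [sq_nonneg (|D| - |D'|)]
        have b5 := mul_le_mul_of_nonneg_left b4 hL0.le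
        have b6 : 2 * D' * ((Gf α p (f r) - n / r * f' r) - (Gf α p (g r) - n / r * g' r)) =
            2 * (D' * (Gf α p (f r) - Gf α p (g r))) - 2 * (n / r * D' ^ 2) := by
          simp only [D']; ring
        rw [b6]
        nlinarith
      have := mul_le_mul_of_nonneg_left key (Real.exp_pos (-((1 + L) * r))).le
      nlinarith
  intro r hr
  have h2 := hanti ⟨le_rfl, hR.le⟩ hr hr.1
  have h3 : y 0 = 0 := by simp [y, h0, h1]
  rw [h3] at h2
  have h4 : (f r - g r) ^ 2 + (f' r - g' r) ^ 2 ≤ 0 := by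
    by_contra hc
    push Not at hc
    have : 0 < y r := mul_pos (Real.exp_pos _) hc
    linarith
  have h5 : (f r - g r) ^ 2 = 0 := by nlinarith [sq_nonneg (f r - g r), sq_nonneg (f' r - g' r)]
  have := pow_eq_zero_iff (two_ne_zero) |>.1 h5
  linarith

/-! ### The solution and its energy -/

structure RSol (n : ℕ) (α p η : ℝ) (h A : ℝ → ℝ) : Prop where
  pos : ∀ t, 0 ≤ t → 0 < h t
  h0 : h 0 = η
  contA : Continuous A
  d1 : ∀ t, HasDerivAt h (t * A t) t
  d2 : ∀ t, 0 ≤ t → HasDerivAt (fun t => t * A t) (Gf α p (h t) - n * A t) t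
  c2 : ContDiff ℝ 2 h
  intA : ∀ t, 0 ≤ t → A t = ∫ σ in (0:ℝ)..1, σ ^ n * Gf α p (h (t * σ))

theorem exists_RSol (n : ℕ) (α p ξ η : ℝ) (hα : 1 < α) (hp : 0 < p) (hξ0 : 0 < ξ)
    (hG : Gf α p ξ = 0) (hη : 0 < η) : ∃ h A, RSol n α p η h A := by
  obtain ⟨a, ha, hab, haF⟩ := Ff_large α p hα hp (min ξ η) (Ff α p η) (lt_min hξ0 hη)
  have haξ : a < ξ := hab.trans_le (min_le_left _ _)
  have haη : a < η := hab.trans_le (min_le_right _ _)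
  set φ : ℝ → ℝ := fun x => Gf α p (max x a) with hφ
  have hL : ∀ x y, |φ x - φ y| ≤ a ^ (-α - 1) * |x - y| := by
    intro x y
    refine (Gf_lip α p a hα ha _ _ (le_max_right _ _) (le_max_right _ _)).trans ?_
    exact mul_le_mul_of_nonneg_left (abs_max_sub_max_le_abs x y a) (Real.rpow_pos_of_pos ha _).le
  have hc : Continuous φ := by
    rw [continuous_iff_continuousAt]
    intro x
    have h1 : ContinuousAt (Gf α p) (max x a) :=
      (Gf_deriv α p _ hα (lt_max_of_lt_right ha)).continuousAt
    exact ContinuousAt.comp (f := fun x => max x a) h1 (by fun_prop)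
  have hB : ∀ x, |φ x| ≤ 1 / α * a ^ (-α) + p := by
    intro x
    have h1 : (max x a) ^ (-α) ≤ a ^ (-α) :=
      Real.rpow_le_rpow_of_nonpos ha (le_max_right _ _) (by linarith)
    have h2 : 0 < (max x a) ^ (-α) := Real.rpow_pos_of_pos (lt_max_of_lt_right ha) _
    have h3 : 0 < 1 / α := by positivity
    have h4 := mul_le_mul_of_nonneg_left h1 h3.le
    have h5 := mul_pos h3 h2
    simp only [hφ, Gf]
    rw [abs_le]
    constructor <;> linarith
  obtain ⟨h, A, h0, cA, d1, iA, d2⟩ := exists_abstract n φ η _ _ (Real.rpow_pos_of_pos ha _).le hc hL hB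
  let Ft : ℝ → ℝ := fun x => -∫ y in ξ..x, φ y
  have hFt : ∀ x, HasDerivAt Ft (-(φ x)) x := fun x =>
    (hc.integral_hasStrictDerivAt ξ x).hasDerivAt.neg
  have hE : ∀ t, HasDerivAt (fun t => (t * A t) ^ 2 / 2 + Ft (h t)) (-(n * t * A t ^ 2)) t := by
    intro t
    have := (((d2 t).pow 2).div_const 2).add ((hFt (h t)).comp t (d1 t))
    refine this.congr_deriv ?_
    simp
    ring
  have hanti : AntitoneOn (fun t => (t * A t) ^ 2 / 2 + Ft (h t)) (Ici 0) := by
    refine antitoneOn_of_hasDerivWithinAt_nonpos (convex_Ici 0)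
      (fun t _ => (hE t).continuousAt.continuousWithinAt) (fun t _ => (hE t).hasDerivWithinAt) ?_
    intro t ht
    rw [interior_Ici] at ht
    have ht : 0 < t := ht
    have : 0 ≤ n * t * A t ^ 2 := by positivity
    linarith
  have hFanti : StrictAntiOn Ft (Iic ξ) := by
    refine strictAntiOn_of_deriv_neg (convex_Iic ξ)
      (fun t _ => (hFt t).continuousAt.continuousWithinAt) ?_
    intro x hx
    rw [interior_Iic] at hx
    rw [(hFt x).deriv]
    have := Gf_pos α p ξ hα hξ0 hG (max x a) (lt_max_of_lt_right ha) (max_lt hx haξ)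
    simp only [hφ]
    linarith
  have hFa : Ft η < Ft a := by
    have i1 : (∫ y in a..η, φ y) = Ff α p a - Ff α p η := by
      have := intervalIntegral.integral_eq_sub_of_hasDerivAt (a := a) (b := η)
        (f := fun x => -(Ff α p x)) (f' := φ) ?_ (hc.intervalIntegrable _ _)
      · rw [this]; ring
      · intro x hx
        rw [uIcc_of_le haη.le] at hx
        have := (Ff_deriv α p x hα (ha.trans_le hx.1)).neg
        simp only [neg_neg] at this
        simp only [hφ, max_eq_left hx.1]
        exact this
    have i2 := intervalIntegral.integral_add_adjacent_intervals (hc.intervalIntegrable (μ := MeasureTheory.volume) ξ a)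
      (hc.intervalIntegrable a η)
    simp only [Ft]
    linarith
  have hge : ∀ t, 0 ≤ t → a ≤ h t := by
    intro t ht
    by_contra hlt
    push Not at hlt
    have e1 := hanti (mem_Ici.2 le_rfl) (mem_Ici.2 ht) ht
    simp only [h0, zero_mul] at e1
    have e2 := hFanti (mem_Iic.2 (hlt.trans haξ).le) (mem_Iic.2 haξ.le) hlt
    have e3 := sq_nonneg (t * A t)
    linarith
  have hφG : ∀ t, 0 ≤ t → φ (h t) = Gf α p (h t) := by
    intro t ht
    simp only [hφ, max_eq_left (hge t ht)]
  have hch : Continuous h := continuous_iff_continuousAt.2 fun t => (d1 t).continuousAt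
  refine ⟨h, A, fun t ht => ha.trans_le (hge t ht), h0, cA, d1, fun t ht => ?_, ?_, fun t ht => ?_⟩
  · rw [← hφG t ht]; exact d2 t
  · have e1 : deriv h = fun t => t * A t := funext fun t => (d1 t).deriv
    have e2 : deriv (fun t => t * A t) = fun t => φ (h t) - n * A t := funext fun t => (d2 t).deriv
    rw [show (2 : WithTop ℕ∞) = 1 + 1 by norm_num, contDiff_succ_iff_deriv]
    refine ⟨fun t => (d1 t).differentiableAt, by simp, ?_⟩
    rw [e1, contDiff_one_iff_deriv]
    refine ⟨fun t => (d2 t).differentiableAt, ?_⟩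
    rw [e2]
    fun_prop
  · rw [iA t]
    refine intervalIntegral.integral_congr fun σ hσ => ?_
    rw [uIcc_of_le zero_le_one] at hσ
    rw [hφG _ (mul_nonneg ht hσ.1)]

section energy
variable {n : ℕ} {α p ξ η : ℝ} {h A : ℝ → ℝ}

def En (α p ξ : ℝ) (h A : ℝ → ℝ) (t : ℝ) : ℝ := (t * A t) ^ 2 / 2 + (Ff α p (h t) - Ff α p ξ)

theorem RSol.En_deriv (S : RSol n α p η h A) (hα : 1 < α) (t : ℝ) (ht : 0 ≤ t) :
    HasDerivAt (En α p ξ h A) (-(n * t * A t ^ 2)) t := by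
  have := (((S.d2 t ht).pow 2).div_const 2).add
    (((Ff_deriv α p _ hα (S.pos t ht)).comp t (S.d1 t)).sub_const (Ff α p ξ))
  refine this.congr_deriv ?_
  simp
  ring

theorem RSol.En_anti (S : RSol n α p η h A) (hα : 1 < α) :
    AntitoneOn (En α p ξ h A) (Ici 0) := by
  refine antitoneOn_of_hasDerivWithinAt_nonpos (convex_Ici 0)
    (fun t ht => (S.En_deriv hα t ht).continuousAt.continuousWithinAt)
    (fun t ht => (S.En_deriv hα t (interior_subset ht)).hasDerivWithinAt) ?_
  intro t ht
  rw [interior_Ici] at ht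
  have ht : 0 < t := ht
  have : 0 ≤ n * t * A t ^ 2 := by positivity
  linarith

theorem RSol.Ff_le (S : RSol n α p η h A) (hα : 1 < α) (t : ℝ) (ht : 0 ≤ t) :
    (t * A t) ^ 2 / 2 + Ff α p (h t) ≤ Ff α p η := by
  have := S.En_anti (ξ := 0) hα (mem_Ici.2 le_rfl) (mem_Ici.2 ht) ht
  simp only [En, S.h0, zero_mul] at this
  linarith

theorem RSol.En_pos (S : RSol n α p η h A) (hα : 1 < α) (hξ0 : 0 < ξ)
    (hG : Gf α p ξ = 0) (hη : 0 < η) (hne : η ≠ ξ) (t : ℝ) (ht : 0 ≤ t) :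
    0 < En α p ξ h A t := by
  have e0 : 0 < En α p ξ h A 0 := by
    have := Ff_min α p ξ hα hξ0 hG η hη hne
    simp only [En, S.h0, zero_mul]
    linarith
  have hc := (S.En_deriv (ξ := ξ) hα 0 le_rfl).continuousAt
  have ev := (hc.eventually (lt_mem_nhds e0)).filter_mono (nhdsWithin_le_nhds (s := Ioi 0))
  obtain ⟨s, hs, hs0⟩ := (ev.and self_mem_nhdsWithin).exists
  have hs0 : 0 < s := hs0
  rcases le_total t s with hts | hst
  · exact hs.trans_le (S.En_anti hα (mem_Ici.2 ht) (mem_Ici.2 hs0.le) hts)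
  · have hm : MonotoneOn (fun r => r ^ (2 * n) * En α p ξ h A r) (Ici s) := by
      have hd : ∀ r, s ≤ r → HasDerivAt (fun r => r ^ (2 * n) * En α p ξ h A r)
          (((2 * n : ℕ) : ℝ) * r ^ (2 * n - 1) * En α p ξ h A r + r ^ (2 * n) * (-(n * r * A r ^ 2))) r :=
        fun r hr => (hasDerivAt_pow (2 * n) r).mul (S.En_deriv hα r (hs0.le.trans hr))
      refine monotoneOn_of_hasDerivWithinAt_nonneg (convex_Ici s)
        (fun t ht => (hd t ht).continuousAt.continuousWithinAt)
        (fun t ht => (hd t (interior_subset ht)).hasDerivWithinAt) ?_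
      intro r hr
      have hr : s ≤ r := interior_subset hr
      have hr0 : 0 < r := hs0.trans_le hr
      have hF := Ff_min' α p ξ hα hξ0 hG (h r) (S.pos r hr0.le)
      rcases n with _ | n
      · simp
      · have e1 : r ^ (2 * (n + 1)) = r ^ (2 * (n + 1) - 1) * r := by
          rw [← pow_succ]; congr 1
        rw [e1]
        have hq : 0 < r ^ (2 * (n + 1) - 1) := by positivity
        set q := r ^ (2 * (n + 1) - 1)
        have : 0 ≤ 2 * ((n:ℝ) + 1) * q * (Ff α p (h r) - Ff α p ξ) := by
          have : 0 ≤ Ff α p (h r) - Ff α p ξ := by linarith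
          positivity
        simp only [En]
        push_cast
        refine this.trans (le_of_eq ?_)
        ring
    have h1 := hm (mem_Ici.2 le_rfl) (mem_Ici.2 hst) hst
    simp only at h1
    have h2 : 0 < t ^ (2 * n) * En α p ξ h A t := lt_of_lt_of_le (by positivity) h1
    by_contra hc
    push Not at hc
    have : 0 ≤ t ^ (2 * n) := by positivity
    nlinarith

theorem RSol.G_ne (S : RSol n α p η h A) (hα : 1 < α) (hξ0 : 0 < ξ)
    (hG : Gf α p ξ = 0) (hη : 0 < η) (hne : η ≠ ξ) (t : ℝ) (ht : 0 ≤ t) (h0 : t * A t = 0) :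
    Gf α p (h t) ≠ 0 := by
  have := S.En_pos hα hξ0 hG hη hne t ht
  intro hz
  have e : h t = ξ := (Gf_anti α p hα).injOn (mem_Ioi.2 (S.pos t ht)) (mem_Ioi.2 hξ0) (hz.trans hG.symm)
  simp [En, h0, e] at this

theorem RSol.A_zero (S : RSol n α p η h A) : (n + 1) * A 0 = Gf α p η := by
  rw [S.intA 0 le_rfl]
  simp only [zero_mul, S.h0, intervalIntegral.integral_mul_const, integral_pow]
  simp
  field_simp

theorem RSol.finite (S : RSol n α p η h A) (hα : 1 < α) (hξ0 : 0 < ξ)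
    (hG : Gf α p ξ = 0) (hη : 0 < η) (hne : η ≠ ξ) (R : ℝ) :
    {r : ℝ | 0 < r ∧ r * A r = 0 ∧ r ≤ R}.Finite := by
  by_contra hinf
  obtain ⟨x, hx, hacc⟩ := Set.Infinite.exists_accPt_of_subset_isCompact hinf
    (isCompact_Icc (a := (0:ℝ)) (b := R)) (fun r hr => ⟨hr.1.le, hr.2.2⟩)
  have hd := S.d2 x hx.1
  have hfreq := accPt_iff_frequently_nhdsNE.1 hacc
  have hx0 : x * A x = 0 := by
    by_contra hc
    have := (hd.continuousAt.eventually_ne hc).filter_mono (nhdsWithin_le_nhds (s := {x}ᶜ))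
    obtain ⟨y, hy, hy2⟩ := (hfreq.and_eventually this).exists
    exact hy2 hy.2.1
  have hne' : Gf α p (h x) - n * A x ≠ 0 := by
    rcases eq_or_lt_of_le hx.1 with rfl | hpos
    · have h1 := S.A_zero
      have h2 := S.G_ne hα hξ0 hG hη hne 0 le_rfl (by simp)
      rw [S.h0] at h2 ⊢
      intro h3
      apply h2
      have h4 : A 0 = 0 := by linarith
      rw [← h1, h4, mul_zero]
    · have : A x = 0 := by
        rcases mul_eq_zero.1 hx0 with h | h
        · linarith
        · exact h
      have h2 := S.G_ne hα hξ0 hG hη hne x hx.1 hx0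
      simpa [this] using h2
  have := hd.eventually_ne hne' (c := 0)
  obtain ⟨y, hy, hy2⟩ := (hfreq.and_eventually this).exists
  exact hy2 hy.2.1

end energy

section bounds
variable {n : ℕ} {α p ξ η : ℝ} {h A : ℝ → ℝ}

theorem RSol.conth (S : RSol n α p η h A) : Continuous h :=
  continuous_iff_continuousAt.2 fun t => (S.d1 t).continuousAt

theorem RSol.contG (S : RSol n α p η h A) (hα : 1 < α) (t : ℝ) (ht : 0 ≤ t) :
    ContinuousOn (fun σ : ℝ => σ ^ n * Gf α p (h (t * σ))) (Icc 0 1) := by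
  intro σ hσ
  have h1 : ContinuousAt (Gf α p) (h (t * σ)) :=
    (Gf_deriv α p _ hα (S.pos _ (mul_nonneg ht hσ.1))).continuousAt
  have h3 := S.conth
  have h2 : ContinuousAt (fun σ => Gf α p (h (t * σ))) σ :=
    ContinuousAt.comp (f := fun σ => h (t * σ)) h1 (by fun_prop)
  exact ((continuous_pow n).continuousAt.mul h2).continuousWithinAt

theorem RSol.A_lower (S : RSol n α p η h A) (hα : 1 < α) (c : ℝ)
    (hc : ∀ t, 0 ≤ t → c ≤ Gf α p (h t)) (t : ℝ) (ht : 0 ≤ t) : c / (n + 1) ≤ A t := by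
  have e : c / (n + 1) = ∫ σ in (0:ℝ)..1, σ ^ n * c := by
    simp only [intervalIntegral.integral_mul_const, integral_pow]
    simp
    field_simp
  rw [e, S.intA t ht]
  refine intervalIntegral.integral_mono_on zero_le_one
    (Continuous.intervalIntegrable (by fun_prop) _ _)
    (ContinuousOn.intervalIntegrable (by rw [uIcc_of_le zero_le_one]; exact S.contG hα t ht)) ?_
  intro σ hσ
  exact mul_le_mul_of_nonneg_left (hc _ (mul_nonneg ht hσ.1)) (pow_nonneg hσ.1 _)

theorem RSol.A_upper (S : RSol n α p η h A) (hα : 1 < α) (c : ℝ)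
    (hc : ∀ t, 0 ≤ t → Gf α p (h t) ≤ c) (t : ℝ) (ht : 0 ≤ t) : A t ≤ c / (n + 1) := by
  have e : c / (n + 1) = ∫ σ in (0:ℝ)..1, σ ^ n * c := by
    simp only [intervalIntegral.integral_mul_const, integral_pow]
    simp
    field_simp
  rw [e, S.intA t ht]
  refine intervalIntegral.integral_mono_on zero_le_one
    (ContinuousOn.intervalIntegrable (by rw [uIcc_of_le zero_le_one]; exact S.contG hα t ht))
    (Continuous.intervalIntegrable (by fun_prop) _ _) ?_
  intro σ hσ
  exact mul_le_mul_of_nonneg_left (hc _ (mul_nonneg ht hσ.1)) (pow_nonneg hσ.1 _)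

theorem RSol.A_pos (S : RSol n α p η h A) (hα : 1 < α) (t : ℝ) (ht : 0 ≤ t)
    (hc : ∀ s, 0 ≤ s → s ≤ t → 0 < Gf α p (h s)) : 0 < A t := by
  rw [S.intA t ht]
  refine intervalIntegral.intervalIntegral_pos_of_pos_on
    (ContinuousOn.intervalIntegrable (by rw [uIcc_of_le zero_le_one]; exact S.contG hα t ht))
    ?_ zero_lt_one
  intro σ hσ
  exact mul_pos (pow_pos hσ.1 _) (hc _ (mul_nonneg ht hσ.1.le)
    (mul_le_of_le_one_right ht hσ.2.le))

theorem RSol.A_neg (S : RSol n α p η h A) (hα : 1 < α) (t : ℝ) (ht : 0 ≤ t)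
    (hc : ∀ s, 0 ≤ s → s ≤ t → Gf α p (h s) < 0) : A t < 0 := by
  rw [S.intA t ht, ← neg_pos, ← intervalIntegral.integral_neg]
  refine intervalIntegral.intervalIntegral_pos_of_pos_on
    (ContinuousOn.intervalIntegrable (by rw [uIcc_of_le zero_le_one]; exact (S.contG hα t ht).neg))
    ?_ zero_lt_one
  intro σ hσ
  have := mul_neg_of_pos_of_neg (pow_pos hσ.1 n) (hc _ (mul_nonneg ht hσ.1.le)
    (mul_le_of_le_one_right ht hσ.2.le))
  linarith

theorem RSol.h_lower (S : RSol n α p η h A) (hα : 1 < α) (c : ℝ)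
    (hc : ∀ t, 0 ≤ t → c ≤ Gf α p (h t)) (t : ℝ) (ht : 0 ≤ t) :
    η + c / (n + 1) * t ^ 2 / 2 ≤ h t := by
  have hd : ∀ t, HasDerivAt (fun t => h t - c / (n + 1) * t ^ 2 / 2)
      (t * A t - c / (n + 1) * t) t := by
    intro t
    refine ((S.d1 t).sub (((hasDerivAt_pow 2 t).const_mul (c / (n + 1))).div_const 2)).congr_deriv ?_
    simp
    ring
  have hm : MonotoneOn (fun t => h t - c / (n + 1) * t ^ 2 / 2) (Ici 0) := by
    refine monotoneOn_of_hasDerivWithinAt_nonneg (convex_Ici 0)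
      (fun t _ => (hd t).continuousAt.continuousWithinAt)
      (fun t _ => (hd t).hasDerivWithinAt) ?_
    intro r hr
    have hr : 0 ≤ r := interior_subset hr
    have := mul_le_mul_of_nonneg_left (S.A_lower hα c hc r hr) hr
    linarith
  have := hm (mem_Ici.2 le_rfl) (mem_Ici.2 ht) ht
  simp [S.h0] at this
  linarith

theorem RSol.h_upper (S : RSol n α p η h A) (hα : 1 < α) (c : ℝ)
    (hc : ∀ t, 0 ≤ t → Gf α p (h t) ≤ c) (t : ℝ) (ht : 0 ≤ t) :
    h t ≤ η + c / (n + 1) * t ^ 2 / 2 := by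
  have hd : ∀ t, HasDerivAt (fun t => h t - c / (n + 1) * t ^ 2 / 2)
      (t * A t - c / (n + 1) * t) t := by
    intro t
    refine ((S.d1 t).sub (((hasDerivAt_pow 2 t).const_mul (c / (n + 1))).div_const 2)).congr_deriv ?_
    simp
    ring
  have hm : AntitoneOn (fun t => h t - c / (n + 1) * t ^ 2 / 2) (Ici 0) := by
    refine antitoneOn_of_hasDerivWithinAt_nonpos (convex_Ici 0)
      (fun t _ => (hd t).continuousAt.continuousWithinAt)
      (fun t _ => (hd t).hasDerivWithinAt) ?_
    intro r hr
    have hr : 0 ≤ r := interior_subset hr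
    have := mul_le_mul_of_nonneg_left (S.A_upper hα c hc r hr) hr
    linarith
  have := hm (mem_Ici.2 le_rfl) (mem_Ici.2 ht) ht
  simp [S.h0] at this
  linarith

theorem RSol.first (S : RSol n α p η h A) (hα : 1 < α) (hξ0 : 0 < ξ)
    (hG : Gf α p ξ = 0) (hη : 0 < η) (hne : η ≠ ξ) (r : ℝ) (hr : 0 < r) (hz : r * A r = 0) :
    2 * (n + 1) * (η - ξ) / (-(Gf α p η)) ≤ r ^ 2 := by
  have hA : A r = 0 := (mul_eq_zero.1 hz).resolve_left hr.ne'
  by_contra hlt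
  push Not at hlt
  have hn : (0:ℝ) < n + 1 := by positivity
  rcases lt_or_gt_of_ne hne with hc | hc
  · -- start below the equilibrium
    have hGη := Gf_pos α p ξ hα hξ0 hG η hη hc
    have hge : ∀ t, 0 ≤ t → η ≤ h t := by
      intro t ht
      by_contra hl
      push Not at hl
      have h1 := Ff_anti α p ξ hα hξ0 hG ⟨S.pos t ht, (hl.trans hc).le⟩ ⟨hη, hc.le⟩ hl
      have h2 := S.Ff_le hα t ht
      nlinarith [sq_nonneg (t * A t)]
    have hGle : ∀ t, 0 ≤ t → Gf α p (h t) ≤ Gf α p η := fun t ht =>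
      (Gf_anti α p hα).antitoneOn (mem_Ioi.2 hη) (mem_Ioi.2 (S.pos t ht)) (hge t ht)
    have hlt' : r ^ 2 < 2 * (n + 1) * (ξ - η) / Gf α p η := by
      refine hlt.trans_eq ?_
      rw [div_neg, ← neg_div]; ring
    rw [lt_div_iff₀ hGη] at hlt'
    have := S.A_pos hα r hr.le ?_
    · linarith
    · intro s hs hsr
      refine Gf_pos α p ξ hα hξ0 hG _ (S.pos s hs) ?_
      have h1 := S.h_upper hα _ hGle s hs
      have h2 : s ^ 2 ≤ r ^ 2 := by gcongr
      have h3 : Gf α p η / (n + 1) * s ^ 2 / 2 < ξ - η := by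
        rw [div_lt_iff₀ two_pos, div_mul_eq_mul_div, div_lt_iff₀ hn]
        nlinarith
      linarith
  · have hGη := Gf_neg α p ξ hα hξ0 hG η hc
    have hge : ∀ t, 0 ≤ t → h t ≤ η := by
      intro t ht
      by_contra hl
      push Not at hl
      have h1 := Ff_mono α p ξ hα hξ0 hG (mem_Ici.2 hc.le) (mem_Ici.2 (hc.trans hl).le) hl
      have h2 := S.Ff_le hα t ht
      nlinarith [sq_nonneg (t * A t)]
    have hGle : ∀ t, 0 ≤ t → Gf α p η ≤ Gf α p (h t) := fun t ht =>
      (Gf_anti α p hα).antitoneOn (mem_Ioi.2 (S.pos t ht)) (mem_Ioi.2 hη) (hge t ht)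
    rw [lt_div_iff₀ (by linarith)] at hlt
    have := S.A_neg hα r hr.le ?_
    · linarith
    · intro s hs hsr
      refine Gf_neg α p ξ hα hξ0 hG _ ?_
      have h1 := S.h_lower hα _ hGle s hs
      have h2 : s ^ 2 ≤ r ^ 2 := by gcongr
      have h3 : ξ - η < Gf α p η / (n + 1) * s ^ 2 / 2 := by
        rw [lt_div_iff₀ two_pos, div_mul_eq_mul_div, lt_div_iff₀ hn]
        nlinarith
      linarith

theorem RSol.bdd (S : RSol n α p η h A) (hα : 1 < α) (hp : 0 < p) (hξ0 : 0 < ξ) :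
    ∃ C, 0 < C ∧ ∀ t, 0 ≤ t → |(h t - ξ) * (t * A t)| ≤ C := by
  have hF : ∀ x, 0 < x → p * x ≤ Ff α p x := by
    intro x hx
    have h3 : 0 < α * (α - 1) := mul_pos (by linarith) (by linarith)
    have := div_pos (Real.rpow_pos_of_pos hx (1 - α)) h3
    unfold Ff
    linarith
  have hη : 0 < η := by rw [← S.h0]; exact S.pos 0 le_rfl
  have hFη : 0 < Ff α p η := lt_of_lt_of_le (by positivity) (hF η hη)
  refine ⟨(Ff α p η / p + ξ) * (1 + 2 * Ff α p η), by positivity, fun t ht => ?_⟩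
  have h1 := S.Ff_le hα t ht
  have h2 := hF _ (S.pos t ht)
  have h0 := S.pos t ht
  rw [abs_mul]
  refine mul_le_mul ?_ ?_ (abs_nonneg _) (by positivity)
  · have : h t ≤ Ff α p η / p := by
      rw [le_div_iff₀ hp]
      nlinarith [sq_nonneg (t * A t)]
    rw [abs_le]
    constructor <;> linarith
  · have h3 : 0 < p * h t := by positivity
    rw [← sq_abs] at h1
    nlinarith [sq_nonneg (|t * A t| - 1)]

theorem RSol.En_small (S : RSol n α p η h A) (hn : 1 ≤ n) (hα : 1 < α) (hp : 0 < p) (hξ0 : 0 < ξ)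
    (hG : Gf α p ξ = 0) (ε : ℝ) (hε : 0 < ε) : ∃ t, 0 ≤ t ∧ En α p ξ h A t < ε := by
  by_contra hcon
  push Not at hcon
  obtain ⟨C, hC, hb⟩ := S.bdd (ξ := ξ) hα hp hξ0
  have hn0 : (1:ℝ) ≤ n := by exact_mod_cast hn
  set c : ℝ := n / 2 with hc
  have hc0 : 0 < c := by positivity
  set M : ℝ := c * (n + 1) * C with hM
  let W : ℝ → ℝ := fun t => En α p ξ h A t + c / t * ((h t - ξ) * (t * A t)) +
    c * ε * Real.log t + M / t
  have hd : ∀ t, 0 < t → HasDerivAt W (-(n * t * A t ^ 2) +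
      (-c / t ^ 2 * ((h t - ξ) * (t * A t)) + c / t * ((t * A t) * (t * A t) +
        (h t - ξ) * (Gf α p (h t) - n * A t))) + c * ε * t⁻¹ + (-M / t ^ 2)) t := by
    intro t ht
    have i1 : ∀ k : ℝ, HasDerivAt (fun t : ℝ => k / t) (-k / t ^ 2) t := by
      intro k
      have := (hasDerivAt_inv ht.ne').const_mul k
      simp only [← div_eq_mul_inv] at this
      refine this.congr_deriv ?_
      field_simp
    exact (((S.En_deriv hα t ht.le).add ((i1 c).mul
      (((S.d1 t).sub_const ξ).mul (S.d2 t ht.le)))).add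
      ((Real.hasDerivAt_log ht.ne').const_mul (c * ε))).add (i1 M)
  have hanti : AntitoneOn W (Ici 1) := by
    refine antitoneOn_of_hasDerivWithinAt_nonpos (convex_Ici 1)
      (fun t ht => (hd t (zero_lt_one.trans_le ht)).continuousAt.continuousWithinAt)
      (fun t ht => (hd t (zero_lt_one.trans_le (interior_subset ht))).hasDerivWithinAt) ?_
    intro t ht
    have ht : 1 ≤ t := interior_subset ht
    have ht0 : 0 < t := by linarith
    have h1 := Ff_convex α p ξ hα hξ0 hG (h t) (S.pos t ht0.le)
    have h2 := hcon t ht0.le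
    have h3 := neg_le_of_abs_le (hb t ht0.le)
    have e : -(n * t * A t ^ 2) +
      (-c / t ^ 2 * ((h t - ξ) * (t * A t)) + c / t * ((t * A t) * (t * A t) +
        (h t - ξ) * (Gf α p (h t) - n * A t))) + c * ε * t⁻¹ + (-M / t ^ 2) =
        c / t * (ε - (t * A t) ^ 2 + (h t - ξ) * Gf α p (h t)) +
        (c * (n + 1)) / t ^ 2 * (-((h t - ξ) * (t * A t)) - C) := by
      rw [hM, hc]
      field_simp
      ring
    rw [e]
    have k1 : ε - (t * A t) ^ 2 + (h t - ξ) * Gf α p (h t) ≤ 0 := by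
      simp only [En] at h2
      nlinarith [sq_nonneg (t * A t)]
    have k2 : -((h t - ξ) * (t * A t)) - C ≤ 0 := by linarith
    have k3 : 0 ≤ c / t := by positivity
    have k4 : 0 ≤ (c * (n + 1)) / t ^ 2 := by positivity
    have := mul_nonpos_of_nonneg_of_nonpos k3 k1
    have := mul_nonpos_of_nonneg_of_nonpos k4 k2
    linarith
  have hlog := (Real.tendsto_log_atTop.const_mul_atTop (mul_pos hc0 hε)).eventually_gt_atTop
    (W 1 + c * C)
  obtain ⟨t, ht, ht1⟩ := (hlog.and (eventually_ge_atTop 1)).exists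
  have ht0 : 0 < t := by linarith
  have h1 := hanti (mem_Ici.2 le_rfl) (mem_Ici.2 ht1) ht1
  have h2 := hcon t ht0.le
  have h3 := neg_le_of_abs_le (hb t ht0.le)
  have h4 : 0 < M / t := by positivity
  have h5 : -(c * C) ≤ c / t * ((h t - ξ) * (t * A t)) := by
    have : c / t ≤ c := div_le_self hc0.le ht1
    have k : 0 < c / t := by positivity
    nlinarith
  have h6 : W t = En α p ξ h A t + c / t * ((h t - ξ) * (t * A t)) +
    c * ε * Real.log t + M / t := rfl
  linarith

theorem RSol.tendsto (S : RSol n α p η h A) (hn : 1 ≤ n) (hα : 1 < α) (hp : 0 < p) (hξ0 : 0 < ξ)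
    (hG : Gf α p ξ = 0) : Tendsto h atTop (nhds ξ) := by
  have key : ∀ x, 0 < x → x ≠ ξ → ∀ᶠ t in atTop, Ff α p (h t) < Ff α p x := by
    intro x hx hne
    have := Ff_min α p ξ hα hξ0 hG x hx hne
    obtain ⟨s, hs, hs2⟩ := S.En_small hn hα hp hξ0 hG (Ff α p x - Ff α p ξ) (by linarith)
    filter_upwards [eventually_ge_atTop s] with t ht
    have h1 := S.En_anti (ξ := ξ) hα (mem_Ici.2 hs) (mem_Ici.2 (hs.trans ht)) ht
    have h2 : En α p ξ h A t = (t * A t) ^ 2 / 2 + (Ff α p (h t) - Ff α p ξ) := rfl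
    nlinarith [sq_nonneg (t * A t)]
  rw [tendsto_order]
  constructor
  · intro a ha
    have hm : max a (ξ / 2) < ξ := max_lt ha (by linarith)
    have hm0 : 0 < max a (ξ / 2) := lt_max_of_lt_right (by linarith)
    filter_upwards [key _ hm0 hm.ne, eventually_ge_atTop 0] with t ht ht0
    by_contra hc
    push Not at hc
    have := (Ff_anti α p ξ hα hξ0 hG).antitoneOn
      ⟨S.pos t ht0, hc.trans ha.le⟩ ⟨hm0, hm.le⟩ (hc.trans (le_max_left _ _))
    linarith
  · intro b hb
    filter_upwards [key b (hξ0.trans hb) hb.ne'] with t ht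
    by_contra hc
    push Not at hc
    have := (Ff_mono α p ξ hα hξ0 hG).monotoneOn (mem_Ici.2 hb.le) (mem_Ici.2 (hb.le.trans hc)) hc
    linarith
end bounds

/-! ### Sturm comparison -/

theorem wronsk_deriv (z z' : ℝ → ℝ) (Q a m r : ℝ) (h1 : HasDerivAt z (z' r) r)
    (h2 : HasDerivAt z' (-(Q * z r)) r) :
    HasDerivAt (fun r => z' r * Real.sin (m * (r - a)) - m * (z r * Real.cos (m * (r - a))))
      ((m ^ 2 - Q) * (z r * Real.sin (m * (r - a)))) r := by
  have hl : HasDerivAt (fun r : ℝ => m * (r - a)) m r := by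
    simpa using ((hasDerivAt_id r).sub_const a).const_mul m
  refine ((h2.mul hl.sin).sub ((h1.mul hl.cos).const_mul m)).congr_deriv ?_
  ring

theorem sturm_upper_aux (z z' Q : ℝ → ℝ) (a m : ℝ) (hm : 0 < m)
    (h1 : ∀ r ∈ Icc a (a + Real.pi / m), HasDerivAt z (z' r) r)
    (h2 : ∀ r ∈ Icc a (a + Real.pi / m), HasDerivAt z' (-(Q r * z r)) r)
    (hQ : ∀ r ∈ Icc a (a + Real.pi / m), m ^ 2 ≤ Q r)
    (hz : ∀ r ∈ Ioc a (a + Real.pi / m), 0 < z r) : False := by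
  have hpm : 0 < Real.pi / m := div_pos Real.pi_pos hm
  have hab : a < a + Real.pi / m := by linarith
  have hza : 0 ≤ z a := by
    have hc : Tendsto z (nhdsWithin a (Ioi a)) (nhds (z a)) :=
      ((h1 a ⟨le_rfl, hab.le⟩).continuousAt.tendsto).mono_left nhdsWithin_le_nhds
    refine ge_of_tendsto hc ?_
    filter_upwards [Ioc_mem_nhdsGT hab] with r hr using (hz r hr).le
  have hd := fun r hr => wronsk_deriv z z' (Q r) a m r (h1 r hr) (h2 r hr)
  have hanti : AntitoneOn (fun r => z' r * Real.sin (m * (r - a)) -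
      m * (z r * Real.cos (m * (r - a)))) (Icc a (a + Real.pi / m)) := by
    refine antitoneOn_of_hasDerivWithinAt_nonpos (convex_Icc _ _)
      (fun t ht => (hd t ht).continuousAt.continuousWithinAt)
      (fun t ht => (hd t (interior_subset ht)).hasDerivWithinAt) ?_
    intro r hr
    rw [interior_Icc] at hr
    have hr' : r ∈ Icc a (a + Real.pi / m) := ⟨hr.1.le, hr.2.le⟩
    have s1 : 0 ≤ Real.sin (m * (r - a)) := by
      refine Real.sin_nonneg_of_nonneg_of_le_pi (mul_nonneg hm.le (by linarith [hr.1])) ?_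
      have : r - a ≤ Real.pi / m := by linarith [hr.2]
      rw [le_div_iff₀ hm] at this
      linarith
    exact mul_nonpos_of_nonpos_of_nonneg (by linarith [hQ r hr'])
      (mul_nonneg (hz r ⟨hr.1, hr.2.le⟩).le s1)
  have := hanti ⟨le_rfl, hab.le⟩ ⟨hab.le, le_rfl⟩ hab.le
  have e : m * (a + Real.pi / m - a) = Real.pi := by field_simp; ring
  simp only [e, Real.sin_pi, Real.cos_pi, sub_self, mul_zero, Real.sin_zero, Real.cos_zero] at this
  have := hz _ ⟨hab, le_rfl⟩
  nlinarith

theorem sign_const (z : ℝ → ℝ) (s : Set ℝ) (hs : s.OrdConnected) (hc : ContinuousOn z s)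
    (hz : ∀ r ∈ s, z r ≠ 0) : (∀ r ∈ s, 0 < z r) ∨ (∀ r ∈ s, z r < 0) := by
  by_contra hcon
  push Not at hcon
  obtain ⟨⟨x, hx, hx2⟩, y, hy, hy2⟩ := hcon
  have := hs.isPreconnected.intermediate_value hx hy hc
  obtain ⟨w, hw, hw2⟩ := this ⟨hx2, hy2⟩
  exact hz w hw hw2

theorem sturm_upper (z z' Q : ℝ → ℝ) (a m : ℝ) (hm : 0 < m)
    (h1 : ∀ r ∈ Icc a (a + Real.pi / m), HasDerivAt z (z' r) r)
    (h2 : ∀ r ∈ Icc a (a + Real.pi / m), HasDerivAt z' (-(Q r * z r)) r)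
    (hQ : ∀ r ∈ Icc a (a + Real.pi / m), m ^ 2 ≤ Q r) :
    ∃ r ∈ Ioc a (a + Real.pi / m), z r = 0 := by
  by_contra hcon
  push Not at hcon
  rcases sign_const z (Ioc a (a + Real.pi / m)) ordConnected_Ioc
    (fun r hr => (h1 r ⟨hr.1.le, hr.2⟩).continuousAt.continuousWithinAt) hcon with h | h
  · exact sturm_upper_aux z z' Q a m hm h1 h2 hQ h
  · refine sturm_upper_aux (fun r => -z r) (fun r => -z' r) Q a m hm (fun r hr => (h1 r hr).neg)
      (fun r hr => ((h2 r hr).neg).congr_deriv (by ring)) hQ (fun r hr => ?_)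
    have := h r hr
    linarith

theorem sturm_lower_aux (z z' Q : ℝ → ℝ) (a b M : ℝ) (hab : a < b) (hM : 0 < M)
    (h1 : ∀ r ∈ Icc a b, HasDerivAt z (z' r) r)
    (h2 : ∀ r ∈ Icc a b, HasDerivAt z' (-(Q r * z r)) r)
    (hQ : ∀ r ∈ Icc a b, Q r ≤ M ^ 2)
    (hza : z a = 0) (hzb : z b = 0) (hb' : z' b ≠ 0)
    (hz : ∀ r ∈ Ioo a b, 0 < z r) : Real.pi / M ≤ b - a := by
  by_contra hcon
  push Not at hcon
  rw [lt_div_iff₀ hM] at hcon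
  have hzb' : z' b < 0 := by
    refine lt_of_le_of_ne ?_ hb'
    have hs := (hasDerivAt_iff_tendsto_slope.1 (h1 b ⟨hab.le, le_rfl⟩)).mono_left
      (nhdsWithin_mono b (fun x (hx : x < b) => hx.ne) : nhdsWithin b (Iio b) ≤ _)
    refine le_of_tendsto hs ?_
    filter_upwards [Ioo_mem_nhdsLT hab] with r hr
    rw [slope_def_field, hzb]
    have := hz r hr
    exact div_nonpos_of_nonneg_of_nonpos (by linarith) (by linarith [hr.2]) |>.trans le_rfl
  have hd := fun r hr => wronsk_deriv z z' (Q r) a M r (h1 r hr) (h2 r hr)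
  have hmono : MonotoneOn (fun r => z' r * Real.sin (M * (r - a)) -
      M * (z r * Real.cos (M * (r - a)))) (Icc a b) := by
    refine monotoneOn_of_hasDerivWithinAt_nonneg (convex_Icc _ _)
      (fun t ht => (hd t ht).continuousAt.continuousWithinAt)
      (fun t ht => (hd t (interior_subset ht)).hasDerivWithinAt) ?_
    intro r hr
    rw [interior_Icc] at hr
    have hr' : r ∈ Icc a b := ⟨hr.1.le, hr.2.le⟩
    have s1 : 0 ≤ Real.sin (M * (r - a)) := by
      refine Real.sin_nonneg_of_nonneg_of_le_pi (mul_nonneg hM.le (by linarith [hr.1])) ?_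
      nlinarith [hr.2]
    exact mul_nonneg (by linarith [hQ r hr']) (mul_nonneg (hz r hr).le s1)
  have := hmono ⟨le_rfl, hab.le⟩ ⟨hab.le, le_rfl⟩ hab.le
  simp only [hza, hzb, sub_self, mul_zero, zero_mul, Real.sin_zero] at this
  have s2 : 0 < Real.sin (M * (b - a)) :=
    Real.sin_pos_of_pos_of_lt_pi (mul_pos hM (by linarith)) (by linarith)
  nlinarith

theorem sturm_lower (z z' Q : ℝ → ℝ) (a b M : ℝ) (hab : a < b) (hM : 0 < M)
    (h1 : ∀ r ∈ Icc a b, HasDerivAt z (z' r) r)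
    (h2 : ∀ r ∈ Icc a b, HasDerivAt z' (-(Q r * z r)) r)
    (hQ : ∀ r ∈ Icc a b, Q r ≤ M ^ 2)
    (hza : z a = 0) (hzb : z b = 0) (hb' : z' b ≠ 0)
    (hz : ∀ r ∈ Ioo a b, z r ≠ 0) : Real.pi / M ≤ b - a := by
  rcases sign_const z (Ioo a b) ordConnected_Ioo
    (fun r hr => (h1 r ⟨hr.1.le, hr.2.le⟩).continuousAt.continuousWithinAt) hz with h | h
  · exact sturm_lower_aux z z' Q a b M hab hM h1 h2 hQ hza hzb hb' h
  · refine sturm_lower_aux (fun r => -z r) (fun r => -z' r) Q a b M hab hM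
      (fun r hr => (h1 r hr).neg)
      (fun r hr => ((h2 r hr).neg).congr_deriv (by ring)) hQ (by simp [hza]) (by simp [hzb])
      (by simpa using hb') (fun r hr => ?_)
    have := h r hr
    linarith

/-! ### Enumeration of discrete sets -/

theorem enumerate (S : Set ℝ) (hpos : ∀ r ∈ S, 0 < r) (hfin : ∀ R, {r | r ∈ S ∧ r ≤ R}.Finite)
    (hub : ∀ R, ∃ r ∈ S, R < r) :
    ∃ rk : ℕ → ℝ, StrictMono rk ∧ S = range rk ∧ Tendsto rk atTop atTop ∧
      ∀ k, ∀ r ∈ S, rk k < r → rk (k + 1) ≤ r := by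
  have next : ∀ x, ∃ y ∈ S, x < y ∧ ∀ z ∈ S, x < z → y ≤ z := by
    intro x
    obtain ⟨r, hr, hxr⟩ := hub x
    have hf : {s | (s ∈ S ∧ s ≤ r) ∧ x < s}.Finite := (hfin r).subset fun s hs => hs.1
    obtain ⟨y, hy, hmin⟩ := Set.exists_min_image _ id hf ⟨r, ⟨hr, le_rfl⟩, hxr⟩
    refine ⟨y, hy.1.1, hy.2, fun z hz hxz => ?_⟩
    rcases le_total z r with h | h
    · exact hmin z ⟨⟨hz, h⟩, hxz⟩
    · exact hy.1.2.trans h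
  choose f hfS hflt hfmin using next
  let rk : ℕ → ℝ := fun k => Nat.rec (f 0) (fun _ y => f y) k
  have r0 : rk 0 = f 0 := rfl
  have rs : ∀ k, rk (k + 1) = f (rk k) := fun k => rfl
  have hmono : StrictMono rk := strictMono_nat_of_lt_succ fun k => by rw [rs]; exact hflt _
  have hS : ∀ k, rk k ∈ S := by
    intro k
    cases k with
    | zero => exact hfS 0
    | succ k => rw [rs]; exact hfS _
  have hunb : ∀ R, ∃ k, R < rk k := by
    intro R
    by_contra hc
    push Not at hc
    have : (range rk).Finite := (hfin R).subset (by
      rintro _ ⟨k, rfl⟩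
      exact ⟨hS k, hc k⟩)
    exact Set.infinite_range_of_injective hmono.injective this
  refine ⟨rk, hmono, ?_, ?_, fun k r hr h => by rw [rs]; exact hfmin _ _ hr h⟩
  · apply Subset.antisymm
    · intro s hs
      by_contra hns
      have hlt : ∀ k, rk k < s := by
        intro k
        induction k with
        | zero => exact lt_of_le_of_ne (hfmin 0 s hs (hpos s hs)) fun e => hns ⟨0, e⟩
        | succ k ih => exact lt_of_le_of_ne (hfmin (rk k) s hs ih) fun e => hns ⟨k + 1, e⟩
      obtain ⟨k, hk⟩ := hunb s
      exact lt_asymm hk (hlt k)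
    · rintro _ ⟨k, rfl⟩
      exact hS k
  · refine tendsto_atTop_atTop_of_monotone hmono.monotone fun R => ?_
    obtain ⟨k, hk⟩ := hunb R
    exact ⟨k, hk.le⟩

section zed
variable {n : ℕ} {α p ξ η : ℝ} {h A : ℝ → ℝ}

def zf (n : ℕ) (A : ℝ → ℝ) (r : ℝ) : ℝ := r ^ ((n:ℝ) / 2) * (r * A r)

def zf' (n : ℕ) (α p : ℝ) (h A : ℝ → ℝ) (r : ℝ) : ℝ :=
  r ^ ((n:ℝ) / 2) * (Gf α p (h r) - n * A r + (n:ℝ) / 2 * A r)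

def Qf (n : ℕ) (α : ℝ) (h : ℝ → ℝ) (r : ℝ) : ℝ :=
  h r ^ (-α - 1) - (n:ℝ) / 2 * ((n:ℝ) / 2 + 1) / r ^ 2

theorem RSol.zf_deriv (S : RSol n α p η h A) (r : ℝ) (hr : 0 < r) :
    HasDerivAt (zf n A) (zf' n α p h A r) r := by
  have h1 := Real.hasDerivAt_rpow_const (x := r) (p := (n:ℝ)/2) (Or.inl hr.ne')
  refine (h1.mul (S.d2 r hr.le)).congr_deriv ?_
  rw [zf', Real.rpow_sub_one hr.ne']
  field_simp
  ring

theorem RSol.A_deriv (S : RSol n α p η h A) (r : ℝ) (hr : 0 < r) :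
    HasDerivAt A ((Gf α p (h r) - n * A r - A r) / r) r := by
  have h1 := (S.d2 r hr.le).div (hasDerivAt_id r) hr.ne'
  have ev : A =ᶠ[nhds r] (fun t => t * A t) / id := by
    filter_upwards [isOpen_ne.mem_nhds hr.ne'] with s hs
    have hs : s ≠ 0 := hs
    simp [hs]
  refine (h1.congr_of_eventuallyEq ev).congr_deriv ?_
  simp only [id]
  field_simp

theorem RSol.zf'_deriv (S : RSol n α p η h A) (hα : 1 < α) (r : ℝ) (hr : 0 < r) :
    HasDerivAt (zf' n α p h A) (-(Qf n α h r * zf n A r)) r := by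
  have h1 := Real.hasDerivAt_rpow_const (x := r) (p := (n:ℝ)/2) (Or.inl hr.ne')
  have h2 := (Gf_deriv α p _ hα (S.pos r hr.le)).comp r (S.d1 r)
  have h3 := S.A_deriv r hr
  refine (h1.mul ((h2.sub (h3.const_mul (n:ℝ))).add (h3.const_mul ((n:ℝ)/2)))).congr_deriv ?_
  simp only [Qf, zf, Pi.add_apply, Pi.sub_apply, Function.comp]
  rw [Real.rpow_sub_one hr.ne']
  field_simp
  ring

theorem RSol.Q_tendsto (S : RSol n α p η h A) (hn : 1 ≤ n) (hα : 1 < α) (hp : 0 < p) (hξ0 : 0 < ξ)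
    (hG : Gf α p ξ = 0) : Tendsto (Qf n α h) atTop (nhds (ξ ^ (-α - 1))) := by
  have h1 := (S.tendsto hn hα hp hξ0 hG).rpow_const (p := -α - 1) (Or.inl hξ0.ne')
  have h2 : Tendsto (fun r : ℝ => (n:ℝ) / 2 * ((n:ℝ) / 2 + 1) / r ^ 2) atTop (nhds 0) :=
    tendsto_const_nhds.div_atTop (tendsto_pow_atTop two_ne_zero)
  have h3 := h1.sub h2
  rw [sub_zero] at h3
  exact h3

theorem zf_zero (r : ℝ) (hr : 0 < r) : zf n A r = 0 ↔ r * A r = 0 := by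
  have := (Real.rpow_pos_of_pos hr ((n:ℝ)/2)).ne'
  simp [zf, this]

theorem RSol.zeros (S : RSol n α p η h A) (hn : 1 ≤ n) (hα : 1 < α) (hp : 0 < p) (hξ0 : 0 < ξ)
    (hG : Gf α p ξ = 0) (hη : 0 < η) (hne : η ≠ ξ) (ω : ℝ) (hω : 0 < ω)
    (hω2 : ω ^ 2 = ξ ^ (-α - 1)) :
    ∃ rk : ℕ → ℝ, StrictMono rk ∧ {r | 0 < r ∧ r * A r = 0} = range rk ∧
      Tendsto rk atTop atTop ∧
      Tendsto (fun k => rk (k + 1) - rk k) atTop (nhds (Real.pi / ω)) := by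
  have hQ := S.Q_tendsto hn hα hp hξ0 hG
  rw [← hω2] at hQ
  have up : ∀ m, 0 < m → m < ω → ∃ R, ∀ a, R ≤ a →
      ∃ r ∈ Ioc a (a + Real.pi / m), 0 < r ∧ r * A r = 0 := by
    intro m hm hmω
    have hlt : m ^ 2 < ω ^ 2 := by gcongr
    obtain ⟨R, hR⟩ := eventually_atTop.1 ((hQ.eventually (lt_mem_nhds hlt)).and (eventually_gt_atTop 0))
    refine ⟨R, fun a ha => ?_⟩
    obtain ⟨r, hr, hr2⟩ := sturm_upper (zf n A) (zf' n α p h A) (Qf n α h) a m hm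
      (fun r hr => S.zf_deriv r (hR r (ha.trans hr.1)).2)
      (fun r hr => S.zf'_deriv hα r (hR r (ha.trans hr.1)).2)
      (fun r hr => (hR r (ha.trans hr.1)).1.le)
    have hr0 := (hR r (ha.trans hr.1.le)).2
    exact ⟨r, hr, hr0, (zf_zero r hr0).1 hr2⟩
  obtain ⟨rk, hmono, hrange, htend, hnext⟩ := enumerate {r | 0 < r ∧ r * A r = 0} (fun r hr => hr.1)
    (fun R => (S.finite hα hξ0 hG hη hne R).subset fun r hr => ⟨hr.1.1, hr.1.2, hr.2⟩)
    (by
      intro R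
      obtain ⟨R', hR'⟩ := up (ω / 2) (by positivity) (by linarith)
      obtain ⟨r, hr, hr2⟩ := hR' (max R R') (le_max_right _ _)
      exact ⟨r, hr2, (le_max_left _ _).trans_lt hr.1⟩)
  refine ⟨rk, hmono, hrange, htend, ?_⟩
  have hmem : ∀ k, 0 < rk k ∧ rk k * A (rk k) = 0 := by
    intro k
    have : rk k ∈ {r | 0 < r ∧ r * A r = 0} := by rw [hrange]; exact ⟨k, rfl⟩
    exact this
  rw [tendsto_order]
  constructor
  · intro x hx
    rcases le_or_gt x 0 with hx0 | hx0
    · filter_upwards with k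
      have := hmono (Nat.lt_succ_self k)
      simp only [Nat.succ_eq_add_one] at this
      linarith
    · have hM : ω < Real.pi / x := by
        rw [lt_div_iff₀ hx0]; rw [lt_div_iff₀ hω] at hx; linarith
      obtain ⟨M, hM1, hM2⟩ := exists_between hM
      have hM0 : 0 < M := hω.trans hM1
      have hlt : ω ^ 2 < M ^ 2 := by gcongr
      obtain ⟨R, hR⟩ := eventually_atTop.1 (hQ.eventually (gt_mem_nhds hlt))
      filter_upwards [htend.eventually_ge_atTop R] with k hk
      have hkk := hmono (Nat.lt_succ_self k)
      simp only [Nat.succ_eq_add_one] at hkk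
      have hp0 : ∀ r ∈ Icc (rk k) (rk (k + 1)), 0 < r := fun r hr => (hmem k).1.trans_le hr.1
      have := sturm_lower (zf n A) (zf' n α p h A) (Qf n α h) (rk k) (rk (k + 1)) M hkk hM0
        (fun r hr => S.zf_deriv r (hp0 r hr))
        (fun r hr => S.zf'_deriv hα r (hp0 r hr))
        (fun r hr => (hR r (hk.trans hr.1)).le)
        ((zf_zero _ (hmem k).1).2 (hmem k).2)
        ((zf_zero _ (hmem (k + 1)).1).2 (hmem (k + 1)).2) ?_ ?_
      · refine lt_of_lt_of_le ?_ this
        rw [lt_div_iff₀ hM0]; rw [lt_div_iff₀ hx0] at hM2; linarith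
      · have hz := hmem (k + 1)
        have hA0 : A (rk (k + 1)) = 0 := (mul_eq_zero.1 hz.2).resolve_left hz.1.ne'
        have hne' := S.G_ne hα hξ0 hG hη hne _ hz.1.le hz.2
        have := (Real.rpow_pos_of_pos hz.1 ((n:ℝ)/2)).ne'
        simp [zf', hA0, hne', this]
      · intro r hr hz
        have hr0 := hp0 r ⟨hr.1.le, hr.2.le⟩
        have := hnext k r ⟨hr0, (zf_zero r hr0).1 hz⟩ hr.1
        linarith [hr.2]
  · intro y hy
    have hy0 : 0 < y := (div_pos Real.pi_pos hω).trans hy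
    have hm : Real.pi / y < ω := by
      rw [div_lt_iff₀ hy0]; rw [gt_iff_lt, div_lt_iff₀ hω] at hy; linarith
    obtain ⟨m, hm1, hm2⟩ := exists_between hm
    have hm0 : 0 < m := (div_pos Real.pi_pos hy0).trans hm1
    obtain ⟨R, hR⟩ := up m hm0 hm2
    filter_upwards [htend.eventually_ge_atTop R] with k hk
    obtain ⟨r, hr, hr2⟩ := hR (rk k) hk
    have h1 := hnext k r hr2 hr.1
    have h2 : Real.pi / m < y := by
      rw [div_lt_iff₀ hm0]; rw [div_lt_iff₀ hy0] at hm1; linarith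
    linarith [hr.2]
end zed

/-! ### Final assembly -/

theorem uniq_sol {n : ℕ} {α p η : ℝ} {h A : ℝ → ℝ} (S : RSol n α p η h A) (hα : 1 < α)
    (R : ℝ) (hR : 0 < R) (f : ℝ → ℝ) (pf : ∀ r ∈ Icc (0:ℝ) R, 0 < f r)
    (cf : ContDiffOn ℝ 2 f (Icc 0 R))
    (ode : ∀ r ∈ Ioo (0:ℝ) R, deriv (deriv f) r + (n:ℝ) / r * deriv f r = 1 / α * f r ^ (-α) - p)
    (f0 : f 0 = η) (f'0 : derivWithin f (Icc 0 R) 0 = 0) : ∀ r ∈ Icc (0:ℝ) R, f r = h r := by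
  have eqd : ∀ r ∈ Ioo (0:ℝ) R, derivWithin f (Icc 0 R) r = deriv f r := fun r hr =>
    derivWithin_of_mem_nhds (Icc_mem_nhds hr.1 hr.2)
  have co : ContDiffOn ℝ (1 + 1) f (Ioo 0 R) := by
    have := cf.mono Ioo_subset_Icc_self
    norm_num
    exact this
  rw [contDiffOn_succ_iff_deriv_of_isOpen isOpen_Ioo] at co
  have S1 := S.contA
  have hd : ∀ r ∈ Ioo (0:ℝ) R, HasDerivAt f (derivWithin f (Icc 0 R) r) r := by
    intro r hr
    rw [eqd r hr]
    exact ((co.1 r hr).differentiableAt (isOpen_Ioo.mem_nhds hr)).hasDerivAt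
  refine uniq n α p R hα hR f h (derivWithin f (Icc 0 R)) (fun t => t * A t)
    cf.continuousOn S.conth.continuousOn
    (cf.continuousOn_derivWithin (uniqueDiffOn_Icc hR) (by norm_num))
    (by fun_prop) pf (fun r hr => S.pos r hr.1) hd (fun r _ => S.d1 r) ?_ ?_
    (by rw [f0, S.h0]) (by simp [f'0])
  · intro r hr
    have d := ((co.2.2.differentiableOn (by norm_num) r hr).differentiableAt
      (isOpen_Ioo.mem_nhds hr)).hasDerivAt
    have ev : derivWithin f (Icc 0 R) =ᶠ[nhds r] deriv f := by
      filter_upwards [isOpen_Ioo.mem_nhds hr] with s hs using eqd s hs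
    refine (d.congr_of_eventuallyEq ev).congr_deriv ?_
    rw [eqd r hr]
    have := ode r hr
    unfold Gf
    linarith
  · intro r hr
    refine (S.d2 r hr.1.le).congr_deriv ?_
    have := hr.1.ne'
    field_simp

theorem omega_sq (α p ξ : ℝ) (hα : 1 < α) (hp : 0 < p) (hξ : ξ = (α * p) ^ (-(1 / α))) :
    ((α * p) ^ ((1 + α) / (2 * α))) ^ 2 = ξ ^ (-α - 1) := by
  have h0 : 0 < α * p := by positivity
  rw [hξ, ← Real.rpow_natCast, ← Real.rpow_mul h0.le, ← Real.rpow_mul h0.le]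
  congr 1
  have : α ≠ 0 := by positivity
  push_cast
  field_simp
  ring

/-- For `N ≥ 2`, `α > 1`, `p > 0`, `ξ = (αp)^(-1/α)` and any `η > 0`, `η ≠ ξ`, there is a
unique positive `C²` solution on `[0,∞)` of the radial equation with `h(0) = η`, `h'(0) = 0`;
its positive critical points form a strictly increasing sequence `(r_k)` tending to `∞` with
`r_1 ≥ sqrt(2Nα(η-ξ)/(ξ^(-α)-η^(-α)))` and `r_{k+1} - r_k → π (αp)^(-(1+α)/(2α))`, and for
each `k` the restriction of `h` to `[0, r_k]` is the unique smooth radial Neumann solution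
in `B_{r_k}(0)` with center value `η`. -/
theorem smooth_radial_solutions
    (N : ℕ) (hN : 2 ≤ N) (α p : ℝ) (hα : 1 < α) (hp : 0 < p)
    (ξ : ℝ) (hξ : ξ = (α * p) ^ (-(1 / α)))
    (η : ℝ) (hη : 0 < η) (hηξ : η ≠ ξ) :
    ∃ h : ℝ → ℝ, IsGlobalSol N α p η h ∧
      (∀ h' : ℝ → ℝ, IsGlobalSol N α p η h' → ∀ r ∈ Ici (0 : ℝ), h' r = h r) ∧
      ∃ rk : ℕ → ℝ, StrictMono rk ∧ (∀ k, 0 < rk k) ∧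
        {r : ℝ | 0 < r ∧ deriv h r = 0} = Set.range rk ∧
        Tendsto rk atTop atTop ∧
        Real.sqrt (2 * N * α * (η - ξ) / (ξ ^ (-α) - η ^ (-α))) ≤ rk 0 ∧
        Tendsto (fun k => rk (k + 1) - rk k) atTop
          (nhds (Real.pi * (α * p) ^ (-((1 + α) / (2 * α))))) ∧
        ∀ k, IsNeumannSol N α p (rk k) h ∧
          ∀ g : ℝ → ℝ, IsNeumannSol N α p (rk k) g → g 0 = η →
            ∀ r ∈ Icc (0 : ℝ) (rk k), g r = h r := by
  obtain ⟨n, rfl⟩ : ∃ n, N = n + 1 := ⟨N - 1, by omega⟩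
  have hn : 1 ≤ n := by omega
  have hα0 : α ≠ 0 := by positivity
  have hξ0 := xi_pos α p ξ hα hp hξ
  have hG := Gf_xi α p ξ hα hp hξ
  have hcast : ((n + 1 : ℕ) : ℝ) - 1 = n := by push_cast; ring
  obtain ⟨h, A, S⟩ := exists_RSol n α p ξ η hα hp hξ0 hG hη
  have hd1 : deriv h = fun t => t * A t := funext fun t => (S.d1 t).deriv
  have ode : ∀ r, 0 < r → deriv (deriv h) r + (((n + 1 : ℕ) : ℝ) - 1) / r * deriv h r =
      1 / α * h r ^ (-α) - p := by
    intro r hr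
    rw [hd1, (S.d2 r hr.le).deriv, hcast, Gf]
    field_simp
    ring
  have hω : 0 < (α * p) ^ ((1 + α) / (2 * α)) := by positivity
  obtain ⟨rk, hmono, hrange, htend, hgap⟩ := S.zeros hn hα hp hξ0 hG hη hηξ _ hω
    (omega_sq α p ξ hα hp hξ)
  have hmem : ∀ k, 0 < rk k ∧ rk k * A (rk k) = 0 := by
    intro k
    have : rk k ∈ {r | 0 < r ∧ r * A r = 0} := by rw [hrange]; exact ⟨k, rfl⟩
    exact this
  refine ⟨h, ⟨fun r hr => S.pos r hr, S.c2.contDiffOn, S.h0, ?_, fun r hr => ode r hr⟩, ?_,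
    rk, hmono, fun k => (hmem k).1, ?_, htend, ?_, ?_, fun k => ⟨⟨fun r hr => S.pos r hr.1,
      S.c2.contDiffOn, fun r hr => ode r hr.1, ?_, ?_⟩, ?_⟩⟩
  · rw [(S.d1 0).hasDerivWithinAt.derivWithin (uniqueDiffOn_Ici 0 0 (mem_Ici.2 le_rfl))]
    simp
  · intro f hf r hr
    obtain ⟨fpos, fc, f0, f'0, fode⟩ := hf
    have hr : 0 ≤ r := hr
    have hR : 0 < r + 1 := by linarith
    refine uniq_sol S hα (r + 1) hR f (fun s hs => fpos s hs.1) (fc.mono fun s hs => hs.1) ?_ f0 ?_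
      r ⟨hr, by linarith⟩
    · intro s hs
      have := fode s hs.1
      rwa [hcast] at this
    · refine Eq.trans ?_ f'0
      exact derivWithin_subset (fun s hs => hs.1) (uniqueDiffOn_Icc hR 0 ⟨le_rfl, hR.le⟩)
        (fc.differentiableOn (by norm_num) 0 (mem_Ici.2 le_rfl))
  · rw [← hrange, hd1]
  · rw [Real.sqrt_le_left (hmem 0).1.le]
    have h1 := S.first hα hξ0 hG hη hηξ (rk 0) (hmem 0).1 (hmem 0).2
    refine le_trans (le_of_eq ?_) h1
    have e : ξ ^ (-α) - η ^ (-α) = α * (-(Gf α p η)) := by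
      rw [xi_pow α p ξ hα hp hξ, Gf]
      field_simp
      ring
    rw [e, ← mul_div_mul_left _ (-(Gf α p η)) hα0]
    push_cast
    congr 1
    ring
  · have e : Real.pi * (α * p) ^ (-((1 + α) / (2 * α))) =
        Real.pi / (α * p) ^ ((1 + α) / (2 * α)) := by
      rw [Real.rpow_neg (by positivity)]; rfl
    rw [e]
    exact hgap
  · rw [(S.d1 0).hasDerivWithinAt.derivWithin
      (uniqueDiffOn_Icc (hmem k).1 0 ⟨le_rfl, (hmem k).1.le⟩)]
    simp
  · rw [(S.d1 (rk k)).hasDerivWithinAt.derivWithin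
      (uniqueDiffOn_Icc (hmem k).1 (rk k) ⟨(hmem k).1.le, le_rfl⟩)]
    exact (hmem k).2
  · intro g hg g0
    obtain ⟨gpos, gc, gode, g'0, _⟩ := hg
    refine uniq_sol S hα (rk k) (hmem k).1 g gpos gc ?_ g0 g'0
    intro s hs
    have := gode s hs
    rwa [hcast] at this
end
end
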